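/- arXiv:1604.00775 — 13 statements merged into one kernel-verified Lean document; each statement's English description precedes it below -/
import Mathlib

section
/- Let (A_k)_{k∈F} be a finite family of observables on ℂ^n such that for every k and every outcome x the matrix A_k(x) is a diagonal matrix. Then there exists a single broadcasting channel Λ that broadcasts every A_k, i.e., Λ*(A_k(x) ⊗ 1) = A_k(x) = Λ*(1 ⊗ A_k(x)) for every k and every outcome x. -/
open Matrix
open scoped Kronecker ComplexOrder

noncomputable section

abbrev Mat (n : ℕ) : Type := Matrix (Fin n) (Fin n) ℂ

/-- The channel with Kraus operators `|ii⟩⟨i|` picks out the entries at `(i,i)`. -/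
lemma copy_channel_apply {n : ℕ} (X : Matrix (Fin n × Fin n) (Fin n × Fin n) ℂ) :
    ∑ i : Fin n, (Matrix.single (i, i) i (1 : ℂ))ᴴ * X * Matrix.single (i, i) i (1 : ℂ)
      = Matrix.diagonal (fun i => X (i, i) (i, i)) := by
  have h : ∀ i : Fin n, (Matrix.single (i, i) i (1 : ℂ))ᴴ * X * Matrix.single (i, i) i (1 : ℂ)
      = Matrix.single i i (X (i, i) (i, i)) := by
    intro i
    rw [Matrix.conjTranspose_single, Matrix.single_mul_mul_single]
    simp
  simp_rw [h]
  exact Matrix.sum_single_eq_diagonal _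

/-- A finite family of observables on ℂ^n, all of whose effects are diagonal
matrices, admits a single broadcasting channel that broadcasts every member of the family. -/
theorem diagonal_family_broadcastable {n : ℕ} {F : Type} [Fintype F]
    {Ω : F → Type} [∀ k, Fintype (Ω k)]
    (A : (k : F) → Ω k → Mat n)
    (hpos : ∀ k x, (A k x).PosSemidef)
    (hsum : ∀ k, ∑ x, A k x = 1)
    (hdiag : ∀ k x, (A k x).IsDiag) :
    ∃ (m : ℕ) (K : Fin m → Matrix (Fin n × Fin n) (Fin n) ℂ),
      (∑ i, (K i)ᴴ * K i = 1) ∧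
      ∀ k x,
        (∑ i, (K i)ᴴ * (A k x ⊗ₖ (1 : Mat n)) * K i = A k x) ∧
        (∑ i, (K i)ᴴ * ((1 : Mat n) ⊗ₖ A k x) * K i = A k x) := by
  refine ⟨n, fun i => Matrix.single (i, i) i (1 : ℂ), ?_, fun k x => ?_⟩
  · have h := copy_channel_apply (n := n) 1
    simpa using h
  · have hd : Matrix.diagonal (fun i => A k x i i) = A k x := (hdiag k x).diagonal_diag
    constructor
    · rw [copy_channel_apply]
      simpa using hd
    · rw [copy_channel_apply]
      simpa using hd
end
end

section
/- Let A and B be observables on ℂ^n such that A is commutative, B is commutative, and A and B are mutually commuting. Then there exists a broadcasting channel Λ that broadcasts both A and B, i.e., Λ*(A(x) ⊗ 1) = A(x) = Λ*(1 ⊗ A(x)) and Λ*(B(y) ⊗ 1) = B(y) = Λ*(1 ⊗ B(y)) for all outcomes x, y. -/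
open Matrix
open scoped Kronecker ComplexOrder

noncomputable section

open Matrix
open scoped Kronecker ComplexOrder

/-- A commuting family of Hermitian matrices is simultaneously unitarily diagonalizable. -/
theorem exists_joint_diag {n : ℕ} {J : Type} [Fintype J] (T : J → Mat n)
    (hT : ∀ j, (T j).IsHermitian) (hC : ∀ i j, T i * T j = T j * T i) :
    ∃ (U : Mat n) (d : J → Fin n → ℂ), Uᴴ * U = 1 ∧ U * Uᴴ = 1 ∧
      ∀ j, T j * U = U * diagonal (d j) := by
  classical
  let L : J → EuclideanSpace ℂ (Fin n) →ₗ[ℂ] EuclideanSpace ℂ (Fin n) :=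
    fun j => (T j).toEuclideanLin
  have hL : ∀ j, (L j).IsSymmetric := fun j => isSymmetric_toEuclideanLin_iff.mpr (hT j)
  have hLC : Pairwise (Function.onFun Commute L) := by
    intro i j _
    change L i * L j = L j * L i
    ext v k
    have := congrArg (fun M : Mat n => (M *ᵥ v.ofLp) k) (hC i j)
    simpa [L, Matrix.toLpLin_apply, Matrix.mulVec_mulVec] using this
  have hI := LinearMap.IsSymmetric.directSum_isInternal_of_pairwise_commute hL hLC
  have hO := LinearMap.IsSymmetric.orthogonalFamily_iInf_eigenspaces hL
  have hfin := WellFoundedGT.finite_ne_bot_of_iSupIndep hI.submodule_iSupIndep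
  have hI' := DirectSum.isInternal_ne_bot_iff.mpr hI
  have hO' := hO.comp (γ := {α : J → ℂ // (⨅ j, Module.End.eigenspace (L j) (α j)) ≠ ⊥})
    Subtype.val_injective
  have : Fintype {α : J → ℂ // (⨅ j, Module.End.eigenspace (L j) (α j)) ≠ ⊥} := hfin.fintype
  have hn : Module.finrank ℂ (EuclideanSpace ℂ (Fin n)) = n := by simp
  let e := hI'.subordinateOrthonormalBasis hn hO'
  let f := fun a => (hI'.subordinateOrthonormalBasisIndex hn a hO').1
  have he : ∀ a j, L j (e a) = f a j • e a := by
    intro a j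
    have h := hI'.subordinateOrthonormalBasis_subordinate hn a hO'
    rw [Submodule.mem_iInf] at h
    exact Module.End.mem_eigenspace_iff.mp (h j)
  let U : Mat n := (EuclideanSpace.basisFun (Fin n) ℂ).toBasis.toMatrix e
  refine ⟨U, fun j a => f a j, ?_, ?_, ?_⟩
  · exact OrthonormalBasis.toMatrix_orthonormalBasis_conjTranspose_mul_self _ _
  · exact OrthonormalBasis.toMatrix_orthonormalBasis_self_mul_conjTranspose _ _
  · intro j
    ext k a
    have h := congrArg (fun v : EuclideanSpace ℂ (Fin n) => v k) (he a j)
    rw [mul_diagonal, mul_comm]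
    simpa [L, Matrix.toLpLin_apply, U, Module.Basis.toMatrix_apply, Matrix.mul_apply,
      Matrix.mulVec, dotProduct] using h

/-- The Kraus operators of the measure-and-prepare channel in the basis given by `U`. -/
def krausOp {n : ℕ} (U : Mat n) (i : Fin n) : Matrix (Fin n × Fin n) (Fin n) ℂ :=
  (U ⊗ₖ U) * (single (i, i) i 1 : Matrix (Fin n × Fin n) (Fin n) ℂ) * Uᴴ

theorem kraus_sum {n : ℕ} (U : Mat n) (hU : Uᴴ * U = 1) (X Y : Mat n) (d d' : Fin n → ℂ)
    (hX : X * U = U * diagonal d) (hY : Y * U = U * diagonal d') :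
    ∑ i, (krausOp U i)ᴴ * (X ⊗ₖ Y) * (krausOp U i)
      = U * diagonal (fun i => d i * d' i) * Uᴴ := by
  have hD : ∀ (Z : Mat n) (c : Fin n → ℂ), Z * U = U * diagonal c → Uᴴ * Z * U = diagonal c := by
    intro Z c h
    rw [mul_assoc, h, ← mul_assoc, hU, one_mul]
  have key : ∀ i : Fin n,
      (krausOp U i)ᴴ * (X ⊗ₖ Y) * (krausOp U i)
      = U * single i i (d i * d' i) * Uᴴ := by
    intro i
    have h1 : (U ⊗ₖ U)ᴴ * (X ⊗ₖ Y) * (U ⊗ₖ U) = diagonal d ⊗ₖ diagonal d' := by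
      rw [conjTranspose_kronecker, ← mul_kronecker_mul, ← mul_kronecker_mul, hD X d hX, hD Y d' hY]
    calc _ = U * (single i (i, i) (1 : ℂ) * ((U ⊗ₖ U)ᴴ * (X ⊗ₖ Y) * (U ⊗ₖ U)) *
            single (i, i) i (1 : ℂ)) * Uᴴ := by
            simp only [krausOp, conjTranspose_mul, conjTranspose_conjTranspose, conjTranspose_single,
              star_one, Matrix.mul_assoc]
      _ = _ := by
            rw [h1, single_mul_mul_single]
            simp
  simp_rw [key]
  rw [← Finset.sum_mul, ← Finset.mul_sum]
  congr 2
  ext a b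
  simp [Matrix.sum_apply, single, diagonal_apply, Finset.sum_ite_eq, ite_and]

/-- Two commutative and mutually commuting observables on ℂ^n are
broadcastable. -/
theorem commutative_mutually_commuting_broadcastable {n : ℕ}
    {ΩA ΩB : Type} [Fintype ΩA] [Fintype ΩB]
    (A : ΩA → Mat n) (B : ΩB → Mat n)
    (hApos : ∀ x, (A x).PosSemidef) (hAsum : ∑ x, A x = 1)
    (hBpos : ∀ y, (B y).PosSemidef) (hBsum : ∑ y, B y = 1)
    (hAcomm : ∀ x x', A x * A x' = A x' * A x)
    (hBcomm : ∀ y y', B y * B y' = B y' * B y)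
    (hABcomm : ∀ x y, A x * B y = B y * A x) :
    ∃ (m : ℕ) (K : Fin m → Matrix (Fin n × Fin n) (Fin n) ℂ),
      (∑ i, (K i)ᴴ * K i = 1) ∧
      (∀ x,
        (∑ i, (K i)ᴴ * (A x ⊗ₖ (1 : Mat n)) * K i = A x) ∧
        (∑ i, (K i)ᴴ * ((1 : Mat n) ⊗ₖ A x) * K i = A x)) ∧
      (∀ y,
        (∑ i, (K i)ᴴ * (B y ⊗ₖ (1 : Mat n)) * K i = B y) ∧
        (∑ i, (K i)ᴴ * ((1 : Mat n) ⊗ₖ B y) * K i = B y)) := by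
  obtain ⟨U, d, hU, hU', hd⟩ := exists_joint_diag (Sum.elim A B)
    (by rintro (x | y); exacts [(hApos x).1, (hBpos y).1])
    (by
      rintro (x | y) (x' | y')
      exacts [hAcomm x x', hABcomm x y', (hABcomm x' y).symm, hBcomm y y'])
  have h1 : (1 : Mat n) * U = U * diagonal (fun _ => 1) := by simp
  have hrec : ∀ j, U * diagonal (d j) * Uᴴ = Sum.elim A B j := by
    intro j
    rw [← hd j, Matrix.mul_assoc, hU', Matrix.mul_one]
  have hl : ∀ j, ∑ i, (krausOp U i)ᴴ * (Sum.elim A B j ⊗ₖ (1 : Mat n)) *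
      (krausOp U i) = Sum.elim A B j := by
    intro j
    rw [kraus_sum U hU _ _ _ _ (hd j) h1, ← hrec j]
    simp
  have hr : ∀ j, ∑ i, (krausOp U i)ᴴ * ((1 : Mat n) ⊗ₖ Sum.elim A B j) *
      (krausOp U i) = Sum.elim A B j := by
    intro j
    rw [kraus_sum U hU _ _ _ _ h1 (hd j), ← hrec j]
    simp
  refine ⟨n, krausOp U, ?_,
    fun x => ⟨hl (Sum.inl x), hr (Sum.inl x)⟩, fun y => ⟨hl (Sum.inr y), hr (Sum.inr y)⟩⟩
  have h := kraus_sum U hU 1 1 _ _ h1 h1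
  rw [one_kronecker_one] at h
  simpa only [Matrix.mul_one, mul_one, diagonal_one, hU'] using h
end
end

section
/- Let A and B be observables on ℂ^n and let Λ be a broadcasting channel with Kraus operators K_i such that Λ*(A(x) ⊗ 1) = A(x) and Λ*(1 ⊗ B(y)) = B(y) for all outcomes x, y. Then J(x,y) := ∑_i K_iᴴ (A(x) ⊗ B(y)) K_i defines a joint observable of A and B: each J(x,y) is positive semidefinite, ∑_{y∈Ω_B} J(x,y) = A(x), and ∑_{x∈Ω_A} J(x,y) = B(y). In particular, one-side broadcastable observables are compatible. -/
open Matrix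
open scoped Kronecker ComplexOrder

noncomputable section

/-- If a broadcasting channel one-side broadcasts A and B, then
J(x,y) = Λ*(A(x) ⊗ B(y)) is a joint observable of A and B; in particular
one-side broadcastable observables are compatible. -/
theorem one_side_broadcast_gives_joint_observable {n : ℕ}
    {ΩA ΩB : Type} [Fintype ΩA] [Fintype ΩB]
    (A : ΩA → Mat n) (B : ΩB → Mat n)
    (hApos : ∀ x, (A x).PosSemidef) (hAsum : ∑ x, A x = 1)
    (hBpos : ∀ y, (B y).PosSemidef) (hBsum : ∑ y, B y = 1)
    {m : ℕ} (K : Fin m → Matrix (Fin n × Fin n) (Fin n) ℂ)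
    (hK : ∑ i, (K i)ᴴ * K i = 1)
    (hA : ∀ x, ∑ i, (K i)ᴴ * (A x ⊗ₖ (1 : Mat n)) * K i = A x)
    (hB : ∀ y, ∑ i, (K i)ᴴ * ((1 : Mat n) ⊗ₖ B y) * K i = B y) :
    (∀ x y, (∑ i, (K i)ᴴ * (A x ⊗ₖ B y) * K i).PosSemidef) ∧
    (∀ x, ∑ y, ∑ i, (K i)ᴴ * (A x ⊗ₖ B y) * K i = A x) ∧
    (∀ y, ∑ x, ∑ i, (K i)ᴴ * (A x ⊗ₖ B y) * K i = B y) := by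
  have hl : ∀ y, ∑ x, A x ⊗ₖ B y = (1 : Mat n) ⊗ₖ B y := by
    intro y
    rw [← hAsum]
    ext ⟨a, b⟩ ⟨c, d⟩
    simp [Matrix.sum_apply, Matrix.kroneckerMap_apply, Finset.sum_mul]
  have hr : ∀ x, ∑ y, A x ⊗ₖ B y = A x ⊗ₖ (1 : Mat n) := by
    intro x
    rw [← hBsum]
    ext ⟨a, b⟩ ⟨c, d⟩
    simp [Matrix.sum_apply, Matrix.kroneckerMap_apply, Finset.mul_sum]
  refine ⟨fun x y => ?_, fun x => ?_, fun y => ?_⟩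
  · exact Matrix.posSemidef_sum _ fun i _ =>
      ((hApos x).kronecker (hBpos y)).conjTranspose_mul_mul_same (K i)
  · rw [Finset.sum_comm]
    simp only [← Matrix.sum_mul, ← Matrix.mul_sum, hr, hA]
  · rw [Finset.sum_comm]
    simp only [← Matrix.sum_mul, ← Matrix.mul_sum, hl, hB]
end
end

section
/- Let A and B be observables on ℂ^n and suppose there is an instrument implementing A, with Kraus families (K_{x,i})_i satisfying ∑_i K_{x,i}ᴴ K_{x,i} = A(x), which does not disturb B, i.e., ∑_{x,i} K_{x,i}ᴴ B(y) K_{x,i} = B(y) for every y. Then J(x,y) := ∑_i K_{x,i}ᴴ B(y) K_{x,i} defines a joint observable of A and B: each J(x,y) is positive semidefinite, ∑_{y∈Ω_B} J(x,y) = A(x), and ∑_{x∈Ω_A} J(x,y) = B(y). In particular, if A can be measured without disturbing B then A and B are compatible. -/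
open Matrix
open scoped Kronecker ComplexOrder

noncomputable section

/-- If an instrument implements A and does not disturb B, then
J(x,y) = ∑ᵢ K(x,i)ᴴ B(y) K(x,i) is a joint observable of A and B; in particular,
if A can be measured without disturbing B then A and B are compatible. -/
theorem nondisturbing_instrument_gives_joint_observable {n : ℕ}
    {ΩA ΩB : Type} [Fintype ΩA] [Fintype ΩB]
    (A : ΩA → Mat n) (B : ΩB → Mat n)
    (hApos : ∀ x, (A x).PosSemidef) (hAsum : ∑ x, A x = 1)
    (hBpos : ∀ y, (B y).PosSemidef) (hBsum : ∑ y, B y = 1)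
    {m : ℕ} (K : ΩA → Fin m → Mat n)
    (hinst : ∀ x, ∑ i, (K x i)ᴴ * K x i = A x)
    (hnd : ∀ y, ∑ x, ∑ i, (K x i)ᴴ * B y * K x i = B y) :
    (∀ x y, (∑ i, (K x i)ᴴ * B y * K x i).PosSemidef) ∧
    (∀ x, ∑ y, ∑ i, (K x i)ᴴ * B y * K x i = A x) ∧
    (∀ y, ∑ x, ∑ i, (K x i)ᴴ * B y * K x i = B y) := by
  refine ⟨fun x y => ?_, fun x => ?_, hnd⟩
  · exact Matrix.posSemidef_sum _ fun i _ => (hBpos y).conjTranspose_mul_mul_same (K x i)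
  · rw [Finset.sum_comm, ← hinst x]
    refine Finset.sum_congr rfl fun i _ => ?_
    rw [← Finset.sum_mul, ← Finset.mul_sum, hBsum, mul_one]
end
end

section
/- Let A and B be observables on ℂ^n and let t₁ and t₂ be probability distributions on Ω_A and Ω_B respectively. Define the deformed observables Ã(x) = ½A(x) + ½t₁(x)·1 and B̃(y) = ½B(y) + ½t₂(y)·1. Then J(x,y) := ½t₂(y)A(x) + ½t₁(x)B(y) is a joint observable of Ã and B̃: each J(x,y) is positive semidefinite, ∑_{y∈Ω_B} J(x,y) = Ã(x), and ∑_{x∈Ω_A} J(x,y) = B̃(y). In particular, Ã and B̃ are compatible for any A and B. -/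
open Matrix
open scoped Kronecker ComplexOrder

noncomputable section

/-- Adding 50% white noise makes any pair of observables compatible:
J(x,y) = ½t₂(y)A(x) + ½t₁(x)B(y) is a joint observable of the deformed observables
Ã(x) = ½A(x) + ½t₁(x)·1 and B̃(y) = ½B(y) + ½t₂(y)·1. -/
theorem noisy_observables_compatible {n : ℕ}
    {ΩA ΩB : Type} [Fintype ΩA] [Fintype ΩB]
    (A : ΩA → Mat n) (B : ΩB → Mat n)
    (hApos : ∀ x, (A x).PosSemidef) (hAsum : ∑ x, A x = 1)
    (hBpos : ∀ y, (B y).PosSemidef) (hBsum : ∑ y, B y = 1)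
    (t₁ : ΩA → ℝ) (t₂ : ΩB → ℝ)
    (ht₁pos : ∀ x, 0 ≤ t₁ x) (ht₁sum : ∑ x, t₁ x = 1)
    (ht₂pos : ∀ y, 0 ≤ t₂ y) (ht₂sum : ∑ y, t₂ y = 1) :
    (∀ x y, (((1/2 : ℝ) * t₂ y) • A x + ((1/2 : ℝ) * t₁ x) • B y).PosSemidef) ∧
    (∀ x, ∑ y, (((1/2 : ℝ) * t₂ y) • A x + ((1/2 : ℝ) * t₁ x) • B y)
        = (1/2 : ℝ) • A x + ((1/2 : ℝ) * t₁ x) • (1 : Mat n)) ∧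
    (∀ y, ∑ x, (((1/2 : ℝ) * t₂ y) • A x + ((1/2 : ℝ) * t₁ x) • B y)
        = (1/2 : ℝ) • B y + ((1/2 : ℝ) * t₂ y) • (1 : Mat n)) := by
  refine ⟨fun x y => ?_, fun x => ?_, fun y => ?_⟩
  · have h1 : 0 ≤ (1/2 : ℝ) * t₂ y := mul_nonneg (by norm_num) (ht₂pos y)
    have h2 : 0 ≤ (1/2 : ℝ) * t₁ x := mul_nonneg (by norm_num) (ht₁pos x)
    exact ((hApos x).smul h1).add ((hBpos y).smul h2)
  · rw [Finset.sum_add_distrib, ← Finset.sum_smul, ← Finset.smul_sum, ← Finset.mul_sum,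
      ht₂sum, hBsum, mul_one]
  · rw [Finset.sum_add_distrib, ← Finset.sum_smul, ← Finset.smul_sum, ← Finset.mul_sum,
      ht₁sum, hAsum, mul_one, add_comm]
end
end

section
/- For two qubit observables A and B (observables on ℂ²), the following are equivalent: (i) A and B are mutually commuting, i.e., A(x)B(y) = B(y)A(x) for all outcomes x, y; (ii) A and B are mutually nondisturbing; (iii) A and B are nondisturbing, i.e., A can be measured without disturbing B or B can be measured without disturbing A. -/
open Matrix
open scoped Kronecker ComplexOrder

noncomputable section

/-- Observable `A` can be measured without disturbing observable `B`. -/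
def CanMeasureWithoutDisturbing {n : ℕ} {ΩA ΩB : Type} [Fintype ΩA] [Fintype ΩB]
    (A : ΩA → Mat n) (B : ΩB → Mat n) : Prop :=
  ∃ (m : ℕ) (K : ΩA → Fin m → Mat n),
    (∀ x, ∑ i, (K x i)ᴴ * K x i = A x) ∧
    (∀ y, ∑ x, ∑ i, (K x i)ᴴ * B y * K x i = B y)

open scoped MatrixOrder Matrix.Norms.L2Operator in
lemma exists_sqrt (A : Mat 2) (hA : A.PosSemidef) :
    ∃ S : Mat 2, Sᴴ = S ∧ S * S = A ∧ ∀ B : Mat 2, A * B = B * A → S * B = B * S := by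
  have h0 : 0 ≤ A := Matrix.nonneg_iff_posSemidef.mpr hA
  refine ⟨CFC.sqrt A, ?_, CFC.sqrt_mul_sqrt_self A h0, ?_⟩
  · exact (Matrix.nonneg_iff_posSemidef.mp (CFC.sqrt_nonneg A)).1
  · intro B h
    have : Commute A B := h
    exact this.cfcₙ_nnreal NNReal.sqrt

lemma sqrt_dir {ΩA ΩB : Type} [Fintype ΩA] [Fintype ΩB]
    (A : ΩA → Mat 2) (B : ΩB → Mat 2)
    (hApos : ∀ x, (A x).PosSemidef) (hAsum : ∑ x, A x = 1)
    (h : ∀ x y, A x * B y = B y * A x) : CanMeasureWithoutDisturbing A B := by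
  choose S h1 h2 h3 using fun x => exists_sqrt (A x) (hApos x)
  refine ⟨1, fun x _ => S x, fun x => by simp [h1, h2], fun y => ?_⟩
  have : ∀ x, S x * B y * S x = B y * A x := fun x => by
    rw [h3 x _ (h x y), mul_assoc, h2]
  simp [h1, this, ← Finset.mul_sum, hAsum]

lemma sum_star_mul_zero {ι : Type} [Fintype ι] (X : ι → Mat 2)
    (h : ∑ i, (X i)ᴴ * X i = 0) (i : ι) : X i = 0 := by
  have ht : ∑ i, ((X i)ᴴ * X i).trace = 0 := by
    rw [← Matrix.trace_sum, h, Matrix.trace_zero]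
  rw [Finset.sum_eq_zero_iff_of_nonneg
    (fun i _ => (Matrix.posSemidef_conjTranspose_mul_self (X i)).trace_nonneg)] at ht
  exact Matrix.trace_conjTranspose_mul_self_eq_zero_iff.mp (ht i (Finset.mem_univ i))

lemma exists_roots (B : Mat 2) (hB : Bᴴ = B) :
    ∃ l m : ℝ, (B - (m : ℂ) • 1) * (B - (l : ℂ) • 1) = 0 := by
  have h00 := congrFun (congrFun hB 0) 0
  have h11 := congrFun (congrFun hB 1) 1
  have h10 := congrFun (congrFun hB 1) 0
  simp only [Matrix.conjTranspose_apply, Complex.star_def] at h00 h11 h10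
  obtain ⟨a, ha⟩ := Complex.conj_eq_iff_real.mp h00
  obtain ⟨d, hd⟩ := Complex.conj_eq_iff_real.mp h11
  have hbb : B 0 1 * B 1 0 = (Complex.normSq (B 0 1) : ℂ) := by
    rw [← h10, Complex.mul_conj]
  set q := Complex.normSq (B 0 1)
  have hq : 0 ≤ q := Complex.normSq_nonneg _
  have hs : ((√((a - d) ^ 2 + 4 * q) : ℝ) : ℂ) ^ 2 = ((a - d) ^ 2 + 4 * q : ℂ) := by
    rw [← Complex.ofReal_pow, Real.sq_sqrt (by positivity)]; push_cast; ring
  set s := √((a - d) ^ 2 + 4 * q)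
  refine ⟨(a + d + s) / 2, (a + d - s) / 2, ?_⟩
  ext i j
  fin_cases i <;> fin_cases j <;>
    simp [Matrix.mul_apply, Fin.sum_univ_two, ha, hd, Matrix.one_apply]
  · linear_combination hbb - hs / 4
  · ring
  · ring
  · linear_combination hbb - hs / 4

/-- Kraus operators kill the off-diagonal block. -/
lemma block_zero {ι : Type} [Fintype ι] (K : ι → Mat 2) (C D : Mat 2) (r : ℝ)
    (hC : Cᴴ = C) (hD : Dᴴ = D) (hCC : C * C = (r : ℂ) • C) (hCD : C * D = 0)
    (hfix : ∑ i, (K i)ᴴ * C * K i = C) (i : ι) : C * K i * D = 0 := by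
  refine sum_star_mul_zero (fun i => C * K i * D) ?_ i
  have : ∀ i, (C * K i * D)ᴴ * (C * K i * D) = (r : ℂ) • (D * ((K i)ᴴ * C * K i) * D) := by
    intro i
    calc _ = D * (K i)ᴴ * (C * C) * K i * D := by
          simp only [Matrix.conjTranspose_mul, hC, hD, mul_assoc]
      _ = _ := by rw [hCC]; simp only [Matrix.mul_smul, Matrix.smul_mul, mul_assoc]
  simp only [this]
  rw [← Finset.smul_sum, ← Finset.sum_mul, ← Finset.mul_sum, hfix, mul_assoc, hCD]
  simp

lemma kraus_commute {ι : Type} [Fintype ι] (K : ι → Mat 2) (B : Mat 2) (hB : Bᴴ = B)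
    (h1 : ∑ i, (K i)ᴴ * K i = 1) (hfix : ∑ i, (K i)ᴴ * B * K i = B) (i : ι) :
    B * K i = K i * B := by
  obtain ⟨l, m, h⟩ := exists_roots B hB
  have herm : ∀ t : ℝ, (B - (t : ℂ) • 1)ᴴ = B - (t : ℂ) • 1 := fun t => by
    simp [Matrix.conjTranspose_sub, Matrix.conjTranspose_smul, hB]
  have hf : ∀ t : ℝ, ∑ i, (K i)ᴴ * (B - (t : ℂ) • 1) * K i = B - (t : ℂ) • 1 := fun t => by
    simp only [mul_sub, sub_mul, Finset.sum_sub_distrib, hfix, Matrix.mul_smul, Matrix.smul_mul,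
      mul_one, ← Finset.smul_sum, h1]
  have h' : (B - (l : ℂ) • 1) * (B - (m : ℂ) • 1) = 0 := by
    have := congrArg Matrix.conjTranspose h
    rwa [Matrix.conjTranspose_mul, herm, herm, Matrix.conjTranspose_zero] at this
  have sq : ∀ s t : ℝ, (B - (s : ℂ) • 1) * (B - (t : ℂ) • 1) = 0 →
      (B - (s : ℂ) • 1) * (B - (s : ℂ) • 1) = ((t - s : ℝ) : ℂ) • (B - (s : ℂ) • 1) := by
    intro s t hst
    have : B - (s : ℂ) • (1 : Mat 2) = (B - (t : ℂ) • 1) + ((t - s : ℝ) : ℂ) • 1 := by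
      push_cast; module
    nth_rewrite 2 [this]
    rw [mul_add, hst, Matrix.mul_smul, mul_one, zero_add]
  by_cases hlm : l = m
  · subst hlm
    have := sum_star_mul_zero (fun _ : Unit => B - (l : ℂ) • (1 : Mat 2))
      (by simp only [herm, Finset.univ_unique, Finset.sum_singleton]; exact h) ()
    rw [sub_eq_zero.mp this]
    simp
  · have e1 := block_zero K _ _ _ (herm m) (herm l) (sq m l h) h (hf m) i
    have e2 := block_zero K _ _ _ (herm l) (herm m) (sq l m h') h' (hf l) i
    have key : ((l - m : ℝ) : ℂ) • (B * K i - K i * B) = 0 := by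
      have : ((l - m : ℝ) : ℂ) • (B * K i - K i * B) =
        (B - (l : ℂ) • 1) * K i * (B - (m : ℂ) • 1)
          - (B - (m : ℂ) • 1) * K i * (B - (l : ℂ) • 1) := by
        simp only [mul_sub, sub_mul, Matrix.mul_smul, Matrix.smul_mul, mul_one, one_mul]
        push_cast; module
      rw [this, e1, e2, sub_zero]
    rcases smul_eq_zero.mp key with h0 | h0
    · exact absurd (sub_eq_zero.mp (Complex.ofReal_eq_zero.mp h0)) hlm
    · exact sub_eq_zero.mp h0

lemma nondist_commute {ΩA ΩB : Type} [Fintype ΩA] [Fintype ΩB]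
    (A : ΩA → Mat 2) (B : ΩB → Mat 2) (hAsum : ∑ x, A x = 1)
    (hBpos : ∀ y, (B y).PosSemidef) (h : CanMeasureWithoutDisturbing A B) :
    ∀ x y, A x * B y = B y * A x := by
  obtain ⟨m, K, hK, hfix⟩ := h
  intro x y
  have hB : (B y)ᴴ = B y := (hBpos y).1
  have hc : ∀ x i, B y * K x i = K x i * B y := fun x i =>
    kraus_commute (fun p : ΩA × Fin m => K p.1 p.2) (B y) hB
      (by rw [Fintype.sum_prod_type]; simp [hK, hAsum])
      (by rw [Fintype.sum_prod_type]; exact hfix y) (x, i)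
  rw [← hK x, Finset.sum_mul, Finset.mul_sum]
  refine Finset.sum_congr rfl fun i _ => ?_
  have h2 : (K x i)ᴴ * B y = B y * (K x i)ᴴ := by
    have := congrArg Matrix.conjTranspose (hc x i)
    simpa [Matrix.conjTranspose_mul, hB] using this
  rw [mul_assoc, ← hc, ← mul_assoc, h2, mul_assoc]

/-- For qubit observables, mutual commutativity, mutual nondisturbance
and nondisturbance are all equivalent. -/
theorem qubit_nondisturbing_iff_mutually_commuting
    {ΩA ΩB : Type} [Fintype ΩA] [Fintype ΩB]
    (A : ΩA → Mat 2) (B : ΩB → Mat 2)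
    (hApos : ∀ x, (A x).PosSemidef) (hAsum : ∑ x, A x = 1)
    (hBpos : ∀ y, (B y).PosSemidef) (hBsum : ∑ y, B y = 1) :
    ((∀ x y, A x * B y = B y * A x) ↔
      (CanMeasureWithoutDisturbing A B ∧ CanMeasureWithoutDisturbing B A)) ∧
    ((CanMeasureWithoutDisturbing A B ∧ CanMeasureWithoutDisturbing B A) ↔
      (CanMeasureWithoutDisturbing A B ∨ CanMeasureWithoutDisturbing B A)) := by
  have hAB := sqrt_dir A B hApos hAsum
  have hBA := fun h : ∀ x y, A x * B y = B y * A x =>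
    sqrt_dir B A hBpos hBsum (fun y x => (h x y).symm)
  have cAB := nondist_commute A B hAsum hBpos
  have cBA := fun h : CanMeasureWithoutDisturbing B A =>
    fun x y => (nondist_commute B A hBsum hApos h y x).symm
  refine ⟨⟨fun h => ⟨hAB h, hBA h⟩, fun h => cAB h.1⟩, fun h => Or.inl h.1, ?_⟩
  rintro (h | h)
  · exact ⟨h, hBA (cAB h)⟩
  · exact ⟨hAB (cBA h), h⟩
end
end

section
/- Let P, Q, B be Hermitian 2×2 complex matrices such that PQ ≠ QP, BP = PB, and BQ = QB. Then B is a scalar multiple of the identity: there exists c ∈ ℝ with B = c·1. Consequently, if a qubit observable A is not commutative and a qubit observable B mutually commutes with A, then B is a trivial observable (every B(y) is a scalar multiple of the identity). -/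
open Matrix
open scoped Kronecker ComplexOrder

noncomputable section

/-- If the three commutator components of `B` do not all vanish, everything commuting
with `B` commutes. -/
theorem comm_of_comm_aux (P Q B : Matrix (Fin 2) (Fin 2) ℂ)
    (h : B 0 1 ≠ 0 ∨ B 1 0 ≠ 0 ∨ B 0 0 - B 1 1 ≠ 0)
    (hP : B * P = P * B) (hQ : B * Q = Q * B) : P * Q = Q * P := by
  have p := fun i j => congrFun (congrFun hP i) j
  have q := fun i j => congrFun (congrFun hQ i) j
  simp only [Matrix.mul_apply, Fin.sum_univ_two] at p q
  have p00 := p 0 0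
  have p01 := p 0 1
  have p10 := p 1 0
  have q00 := q 0 0
  have q01 := q 0 1
  have q10 := q 1 0
  clear p q
  ext i j
  rcases h with h | h | h <;> apply mul_left_cancel₀ h <;>
    fin_cases i <;> fin_cases j <;>
    simp only [Matrix.mul_apply, Fin.sum_univ_two, Fin.zero_eta, Fin.mk_one] <;> grind

theorem scalar_aux (P Q B : Matrix (Fin 2) (Fin 2) ℂ) (hB : B.IsHermitian)
    (hPQ : P * Q ≠ Q * P) (hP : B * P = P * B) (hQ : B * Q = Q * B) :
    ∃ c : ℝ, B = (c : ℂ) • (1 : Matrix (Fin 2) (Fin 2) ℂ) := by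
  have h : ¬ (B 0 1 ≠ 0 ∨ B 1 0 ≠ 0 ∨ B 0 0 - B 1 1 ≠ 0) :=
    fun h => hPQ (comm_of_comm_aux P Q B h hP hQ)
  push Not at h
  obtain ⟨h1, h2, h3⟩ := h
  have h0 : ((B 0 0).re : ℂ) = B 0 0 := Complex.conj_eq_iff_re.mp (hB.apply 0 0)
  refine ⟨(B 0 0).re, ?_⟩
  rw [h0]
  ext i j
  fin_cases i <;> fin_cases j <;> simp [h1, h2]
  exact (sub_eq_zero.mp h3).symm

/-- A Hermitian 2×2 matrix commuting with two noncommuting Hermitian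
matrices is a real scalar multiple of the identity; consequently, a qubit observable
mutually commuting with a noncommutative qubit observable is trivial. -/
theorem qubit_commutant_of_noncommuting_pair_is_scalar :
    (∀ P Q B : Mat 2, P.IsHermitian → Q.IsHermitian → B.IsHermitian →
      P * Q ≠ Q * P → B * P = P * B → B * Q = Q * B →
      ∃ c : ℝ, B = (c : ℂ) • (1 : Mat 2)) ∧
    (∀ (ΩA ΩB : Type) (_ : Fintype ΩA) (_ : Fintype ΩB)
      (A : ΩA → Mat 2) (B : ΩB → Mat 2),
      (∀ x, (A x).PosSemidef) → (∑ x, A x = 1) →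
      (∀ y, (B y).PosSemidef) → (∑ y, B y = 1) →
      (¬ ∀ x x', A x * A x' = A x' * A x) →
      (∀ x y, A x * B y = B y * A x) →
      ∀ y, ∃ c : ℝ, B y = (c : ℂ) • (1 : Mat 2)) := by
  refine ⟨fun P Q B _ _ hB hPQ hP hQ => scalar_aux P Q B hB hPQ hP hQ, ?_⟩
  intro ΩA ΩB _ _ A B _ _ hB _ hA hAB y
  push Not at hA
  obtain ⟨x, x', hx⟩ := hA
  exact scalar_aux (A x) (A x') (B y) (hB y).isHermitian hx (hAB x y).symm (hAB x' y).symm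
end
end

section
/- Two qubit observables A and B (observables on ℂ²) are broadcastable — i.e., there exists a broadcasting channel Λ with Λ*(A(x) ⊗ 1) = A(x) = Λ*(1 ⊗ A(x)) and Λ*(B(y) ⊗ 1) = B(y) = Λ*(1 ⊗ B(y)) for all outcomes x, y — if and only if A is commutative, B is commutative, and A and B are mutually commuting. -/
open Matrix
open scoped Kronecker ComplexOrder

noncomputable section

theorem qb_intertwine {m : ℕ} (K : Fin m → Matrix (Fin 2 × Fin 2) (Fin 2) ℂ)
    (hK : ∑ i, (K i)ᴴ * K i = 1) (H : Mat 2) (hH : H.IsHermitian)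
    (X : Matrix (Fin 2 × Fin 2) (Fin 2 × Fin 2) ℂ) (hX : X.IsHermitian)
    (hXX : X * X = H.trace • X - H.det • 1)
    (hf : ∑ i, (K i)ᴴ * X * K i = H) (i : Fin m) : X * K i = K i * H := by
  have hHH : H * H = H.trace • H - H.det • (1 : Mat 2) := by
    ext a b
    fin_cases a <;> fin_cases b <;>
      simp [Matrix.mul_apply, Fin.sum_univ_two, Matrix.trace, Matrix.det_fin_two] <;> ring
  have hS : ∑ i, (K i)ᴴ * (X * X) * K i = H * H := by
    rw [hHH, hXX]
    conv_rhs => rw [← hK]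
    simp only [Matrix.mul_sub, Matrix.sub_mul, Finset.sum_sub_distrib, Matrix.mul_smul,
      Matrix.smul_mul, Matrix.mul_one, ← Finset.smul_sum, hf]
  have hz : ∑ i, (X * K i - K i * H)ᴴ * (X * K i - K i * H) = 0 := by
    have e : ∀ i, (X * K i - K i * H)ᴴ * (X * K i - K i * H)
        = (K i)ᴴ * (X * X) * K i - ((K i)ᴴ * X * K i) * H - H * ((K i)ᴴ * X * K i)
          + H * ((K i)ᴴ * K i) * H := by
      intro i
      rw [Matrix.conjTranspose_sub, Matrix.conjTranspose_mul, Matrix.conjTranspose_mul,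
        hX.eq, hH.eq]
      simp only [Matrix.mul_sub, Matrix.sub_mul, Matrix.mul_assoc]
      abel
    simp only [e, Finset.sum_add_distrib, Finset.sum_sub_distrib, ← Finset.sum_mul,
      ← Finset.mul_sum, hS, hf, hK]
    simp
  have ht := congrArg Matrix.trace hz
  rw [Matrix.trace_sum, Matrix.trace_zero,
    Finset.sum_eq_zero_iff_of_nonneg
      (fun i _ => (Matrix.posSemidef_conjTranspose_mul_self _).trace_nonneg)] at ht
  have := ht i (Finset.mem_univ i)
  rw [Matrix.trace_conjTranspose_mul_self_eq_zero_iff] at this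
  exact sub_eq_zero.mp this

theorem qb_comm {m : ℕ} (K : Fin m → Matrix (Fin 2 × Fin 2) (Fin 2) ℂ)
    (hK : ∑ i, (K i)ᴴ * K i = 1) (H G : Mat 2) (hH : H.IsHermitian) (hG : G.IsHermitian)
    (h1 : ∑ i, (K i)ᴴ * (H ⊗ₖ (1 : Mat 2)) * K i = H)
    (h2 : ∑ i, (K i)ᴴ * ((1 : Mat 2) ⊗ₖ G) * K i = G) : H * G = G * H := by
  have ch : ∀ H : Mat 2, H * H = H.trace • H - H.det • (1 : Mat 2) := by
    intro H
    ext a b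
    fin_cases a <;> fin_cases b <;>
      simp [Matrix.mul_apply, Fin.sum_univ_two, Matrix.trace, Matrix.det_fin_two] <;> ring
  have i1 := qb_intertwine K hK H hH (H ⊗ₖ (1 : Mat 2))
    (by rw [Matrix.IsHermitian, Matrix.conjTranspose_kronecker, hH.eq]; simp)
    (by rw [← Matrix.mul_kronecker_mul, ch H, sub_eq_add_neg, Matrix.add_kronecker,
          ← neg_smul, Matrix.smul_kronecker, Matrix.smul_kronecker]; simp [sub_eq_add_neg]) h1
  have i2 := qb_intertwine K hK G hG ((1 : Mat 2) ⊗ₖ G)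
    (by rw [Matrix.IsHermitian, Matrix.conjTranspose_kronecker, hG.eq]; simp)
    (by rw [← Matrix.mul_kronecker_mul, ch G, sub_eq_add_neg, mul_one, Matrix.kronecker_add,
          ← neg_smul, Matrix.kronecker_smul, Matrix.kronecker_smul]; simp [sub_eq_add_neg]) h2
  have key : ∀ i, K i * (H * G) = K i * (G * H) := by
    intro i
    rw [← Matrix.mul_assoc, ← i1 i, Matrix.mul_assoc, ← i2 i, ← Matrix.mul_assoc,
      ← Matrix.mul_kronecker_mul, ← Matrix.mul_assoc, ← i2 i, Matrix.mul_assoc, ← i1 i,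
      ← Matrix.mul_assoc, ← Matrix.mul_kronecker_mul]
    simp
  calc H * G = ∑ i, (K i)ᴴ * (K i * (H * G)) := by
        simp only [← Matrix.mul_assoc (_ᴴ), ← Finset.sum_mul, hK, one_mul]
    _ = ∑ i, (K i)ᴴ * (K i * (G * H)) := by simp only [key]
    _ = G * H := by
        simp only [← Matrix.mul_assoc (_ᴴ), ← Finset.sum_mul, hK, one_mul]

theorem qb_simdiag (S : Set (Mat 2)) (hS : ∀ X ∈ S, X.IsHermitian)
    (hc : ∀ X ∈ S, ∀ Y ∈ S, X * Y = Y * X) :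
    ∃ U : Mat 2, Uᴴ * U = 1 ∧ U * Uᴴ = 1 ∧ ∀ X ∈ S, (Uᴴ * X * U) 0 1 = 0 ∧
      (Uᴴ * X * U) 1 0 = 0 := by
  by_cases h : ∀ X ∈ S, X 0 1 = 0 ∧ X 1 0 = 0
  · exact ⟨1, by simp, by simp, by simpa using h⟩
  push Not at h
  obtain ⟨H, hHS, hne⟩ := h
  have hH := hS H hHS
  let U : Mat 2 := hH.eigenvectorUnitary
  let D : Mat 2 := Matrix.diagonal (RCLike.ofReal ∘ hH.eigenvalues)
  have hU1 : Uᴴ * U = 1 := by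
    have := (Unitary.mem_iff.mp hH.eigenvectorUnitary.2).1
    simpa [Matrix.star_eq_conjTranspose] using this
  have hU2 : U * Uᴴ = 1 := by
    have := (Unitary.mem_iff.mp hH.eigenvectorUnitary.2).2
    simpa [Matrix.star_eq_conjTranspose] using this
  have hsp : H = U * D * Uᴴ := by
    have := hH.spectral_theorem
    rw [Unitary.conjStarAlgAut_apply] at this
    exact this
  have hD : Uᴴ * H * U = D := by
    rw [hsp]
    calc Uᴴ * (U * D * Uᴴ) * U = (Uᴴ * U) * D * (Uᴴ * U) := by simp only [Matrix.mul_assoc]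
      _ = D := by simp [hU1]
  have hd : D 0 0 ≠ D 1 1 := by
    intro hd
    have hDs : D = D 0 0 • (1 : Mat 2) := by
      ext a b
      fin_cases a <;> fin_cases b <;> simp [D] at hd ⊢
      exact hd.symm
    have : H = D 0 0 • (1 : Mat 2) := by
      rw [hsp]
      conv_lhs => rw [hDs]
      simp [hU2]
    rw [this] at hne
    simp at hne
  refine ⟨U, hU1, hU2, fun X hX => ?_⟩
  have hcm : D * (Uᴴ * X * U) = (Uᴴ * X * U) * D := by
    have e : ∀ P Q : Mat 2, (Uᴴ * P * U) * (Uᴴ * Q * U) = Uᴴ * (P * Q) * U := by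
      intro P Q
      calc (Uᴴ * P * U) * (Uᴴ * Q * U) = Uᴴ * P * (U * Uᴴ) * Q * U := by
            simp only [Matrix.mul_assoc]
        _ = _ := by rw [hU2]; simp only [Matrix.mul_assoc, Matrix.one_mul]
    rw [← hD, e, e, hc H hHS X hX]
  generalize Uᴴ * X * U = M at hcm
  have h01 := congrFun (congrFun hcm 0) 1
  have h10 := congrFun (congrFun hcm 1) 0
  have d01 : D 0 1 = 0 := by simp [D]
  have d10 : D 1 0 = 0 := by simp [D]
  simp only [Matrix.mul_apply, Fin.sum_univ_two, d01, d10] at h01 h10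
  have hd' := sub_ne_zero.mpr hd
  constructor
  · apply mul_left_cancel₀ hd'
    linear_combination h01
  · apply mul_left_cancel₀ hd'
    linear_combination -h10

def qbV : Matrix (Fin 2 × Fin 2) (Fin 2) ℂ := fun p c => if p.1 = c ∧ p.2 = c then 1 else 0

theorem qbV_left (M : Mat 2) (h : M 0 1 = 0 ∧ M 1 0 = 0) :
    qbVᴴ * (M ⊗ₖ (1 : Mat 2)) * qbV = M := by
  ext a b
  fin_cases a <;> fin_cases b <;>
    simp [Matrix.mul_apply, Fintype.sum_prod_type, Fin.sum_univ_two, qbV, h]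

theorem qbV_right (M : Mat 2) (h : M 0 1 = 0 ∧ M 1 0 = 0) :
    qbVᴴ * ((1 : Mat 2) ⊗ₖ M) * qbV = M := by
  ext a b
  fin_cases a <;> fin_cases b <;>
    simp [Matrix.mul_apply, Fintype.sum_prod_type, Fin.sum_univ_two, qbV, h]

theorem qb_broadcast (U X : Mat 2) (hU1 : Uᴴ * U = 1) (hU2 : U * Uᴴ = 1)
    (h : (Uᴴ * X * U) 0 1 = 0 ∧ (Uᴴ * X * U) 1 0 = 0) :
    ((U ⊗ₖ U) * qbV * Uᴴ)ᴴ * (X ⊗ₖ (1 : Mat 2)) * ((U ⊗ₖ U) * qbV * Uᴴ) = X ∧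
    ((U ⊗ₖ U) * qbV * Uᴴ)ᴴ * ((1 : Mat 2) ⊗ₖ X) * ((U ⊗ₖ U) * qbV * Uᴴ) = X := by
  have fin : U * (Uᴴ * X * U) * Uᴴ = X := by
    calc U * (Uᴴ * X * U) * Uᴴ = (U * Uᴴ) * X * (U * Uᴴ) := by simp only [Matrix.mul_assoc]
      _ = X := by simp [hU2]
  have e : ∀ Z : Matrix (Fin 2 × Fin 2) (Fin 2 × Fin 2) ℂ,
      ((U ⊗ₖ U) * qbV * Uᴴ)ᴴ * Z * ((U ⊗ₖ U) * qbV * Uᴴ)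
        = U * (qbVᴴ * ((Uᴴ ⊗ₖ Uᴴ) * Z * (U ⊗ₖ U)) * qbV) * Uᴴ := by
    intro Z
    simp only [Matrix.conjTranspose_mul, Matrix.conjTranspose_kronecker,
      Matrix.conjTranspose_conjTranspose, Matrix.mul_assoc]
  constructor
  · rw [e, ← Matrix.mul_kronecker_mul, ← Matrix.mul_kronecker_mul, Matrix.mul_one, hU1,
      qbV_left _ h, fin]
  · rw [e, ← Matrix.mul_kronecker_mul, ← Matrix.mul_kronecker_mul, Matrix.mul_one, hU1,
      qbV_right _ h, fin]

/-- Two qubit observables are broadcastable iff each is commutative and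
they are mutually commuting. -/
theorem qubit_broadcastable_iff_commutative_and_mutually_commuting
    {ΩA ΩB : Type} [Fintype ΩA] [Fintype ΩB]
    (A : ΩA → Mat 2) (B : ΩB → Mat 2)
    (hApos : ∀ x, (A x).PosSemidef) (hAsum : ∑ x, A x = 1)
    (hBpos : ∀ y, (B y).PosSemidef) (hBsum : ∑ y, B y = 1) :
    (∃ (m : ℕ) (K : Fin m → Matrix (Fin 2 × Fin 2) (Fin 2) ℂ),
      (∑ i, (K i)ᴴ * K i = 1) ∧
      (∀ x,
        (∑ i, (K i)ᴴ * (A x ⊗ₖ (1 : Mat 2)) * K i = A x) ∧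
        (∑ i, (K i)ᴴ * ((1 : Mat 2) ⊗ₖ A x) * K i = A x)) ∧
      (∀ y,
        (∑ i, (K i)ᴴ * (B y ⊗ₖ (1 : Mat 2)) * K i = B y) ∧
        (∑ i, (K i)ᴴ * ((1 : Mat 2) ⊗ₖ B y) * K i = B y))) ↔
    ((∀ x x', A x * A x' = A x' * A x) ∧
     (∀ y y', B y * B y' = B y' * B y) ∧
     (∀ x y, A x * B y = B y * A x)) := by
  constructor
  · rintro ⟨m, K, hK, hA, hB⟩
    exact ⟨fun x x' => qb_comm K hK _ _ (hApos x).1 (hApos x').1 (hA x).1 (hA x').2,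
      fun y y' => qb_comm K hK _ _ (hBpos y).1 (hBpos y').1 (hB y).1 (hB y').2,
      fun x y => qb_comm K hK _ _ (hApos x).1 (hBpos y).1 (hA x).1 (hB y).2⟩
  · rintro ⟨hAA, hBB, hAB⟩
    obtain ⟨U, hU1, hU2, hU⟩ := qb_simdiag (Set.range A ∪ Set.range B)
      (by
        rintro X (⟨x, rfl⟩ | ⟨y, rfl⟩)
        · exact (hApos x).1
        · exact (hBpos y).1)
      (by
        rintro X (⟨x, rfl⟩ | ⟨y, rfl⟩) Y (⟨x', rfl⟩ | ⟨y', rfl⟩)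
        · exact hAA _ _
        · exact hAB _ _
        · exact (hAB _ _).symm
        · exact hBB _ _)
    refine ⟨1, fun _ => (U ⊗ₖ U) * qbV * Uᴴ, ?_, fun x => ?_, fun y => ?_⟩
    · have := (qb_broadcast U 1 hU1 hU2 (by simp [hU1])).1
      rw [Matrix.one_kronecker_one, Matrix.mul_one] at this
      simpa using this
    · have := qb_broadcast U (A x) hU1 hU2 (hU _ (Or.inl ⟨x, rfl⟩))
      simpa only [Fin.sum_univ_one] using this
    · have := qb_broadcast U (B y) hU1 hU2 (hU _ (Or.inr ⟨y, rfl⟩))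
      simpa only [Fin.sum_univ_one] using this
end
end

section
/- Two qubit observables A and B (observables on ℂ²) are one-side broadcastable — i.e., there exists a broadcasting channel Λ with Λ*(A(x) ⊗ 1) = A(x) and Λ*(1 ⊗ B(y)) = B(y) for all outcomes x, y — if and only if A and B are mutually commuting, i.e., A(x)B(y) = B(y)A(x) for all outcomes x, y. -/
open Matrix
open scoped Kronecker ComplexOrder

noncomputable section

lemma qb_span {a b : Mat 2} (h : a * b = b * a) (ha : ¬ ∃ c : ℂ, a = c • (1 : Mat 2)) :
    ∃ s t : ℂ, b = s • (1 : Mat 2) + t • a := by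
  have h00 := congrFun (congrFun h 0) 0
  have h01 := congrFun (congrFun h 0) 1
  have h10 := congrFun (congrFun h 1) 0
  simp only [Matrix.mul_apply, Fin.sum_univ_two] at h00 h01 h10
  by_cases hq : a 0 1 = 0
  · by_cases hr : a 1 0 = 0
    · have hd : a 0 0 - a 1 1 ≠ 0 := by
        intro hd
        apply ha
        refine ⟨a 0 0, ?_⟩
        have : a 1 1 = a 0 0 := by linear_combination -hd
        ext i j
        fin_cases i <;> fin_cases j <;> simp [hq, hr, this]
      have e1 : b 0 1 = 0 := by
        apply (mul_eq_zero.mp (?_ : (a 0 0 - a 1 1) * b 0 1 = 0)).resolve_left hd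
        rw [hq] at h01; linear_combination h01
      have e2 : b 1 0 = 0 := by
        apply (mul_eq_zero.mp (?_ : (a 0 0 - a 1 1) * b 1 0 = 0)).resolve_left hd
        rw [hr] at h10; linear_combination -h10
      refine ⟨b 0 0 - (b 0 0 - b 1 1) / (a 0 0 - a 1 1) * a 0 0,
        (b 0 0 - b 1 1) / (a 0 0 - a 1 1), ?_⟩
      ext i j
      fin_cases i <;> fin_cases j <;> simp [hq, hr, e1, e2]
      field_simp
      ring
    · refine ⟨b 0 0 - b 1 0 / a 1 0 * a 0 0, b 1 0 / a 1 0, ?_⟩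
      ext i j
      fin_cases i <;> fin_cases j <;> simp [hr]
      · field_simp
        linear_combination -h00
      · field_simp
        linear_combination -h10
  · refine ⟨b 0 0 - b 0 1 / a 0 1 * a 0 0, b 0 1 / a 0 1, ?_⟩
    ext i j
    fin_cases i <;> fin_cases j <;> simp [hq]
    · field_simp
      linear_combination h00
    · field_simp
      linear_combination h01

lemma qb_commute {m : ℕ} (K : Fin m → Matrix (Fin 2 × Fin 2) (Fin 2) ℂ)
    (hK : ∑ i, (K i)ᴴ * K i = 1) (a b : Mat 2) (ha : aᴴ = a)
    (hA : ∑ i, (K i)ᴴ * (a ⊗ₖ (1 : Mat 2)) * K i = a)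
    (hB : ∑ i, (K i)ᴴ * ((1 : Mat 2) ⊗ₖ b) * K i = b) : a * b = b * a := by
  set P := a ⊗ₖ (1 : Mat 2) with hP
  have hPH : Pᴴ = P := by
    rw [hP, Matrix.conjTranspose_kronecker, ha, Matrix.conjTranspose_one]
  have ch : a * a = a.trace • a - a.det • (1 : Mat 2) := by
    ext i j
    fin_cases i <;> fin_cases j <;>
      simp [Matrix.mul_apply, Fin.sum_univ_two, Matrix.trace_fin_two, Matrix.det_fin_two] <;> ring
  have chP : P * P = a.trace • P - a.det • 1 := by
    rw [hP, ← Matrix.mul_kronecker_mul, ch, Matrix.one_mul, sub_eq_add_neg, ← neg_smul,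
      Matrix.add_kronecker, Matrix.smul_kronecker, Matrix.smul_kronecker,
      Matrix.one_kronecker_one, neg_smul, ← sub_eq_add_neg]
  have hA2 : ∑ i, (K i)ᴴ * (P * P) * K i = a * a := by
    rw [chP, ch]
    simp only [Matrix.mul_sub, Matrix.sub_mul, Finset.sum_sub_distrib, Matrix.mul_smul,
      Matrix.smul_mul, ← Finset.smul_sum, Matrix.mul_one, hA, hK]
  have hz : ∑ i, (P * K i - K i * a)ᴴ * (P * K i - K i * a) = 0 := by
    have : ∀ i, (P * K i - K i * a)ᴴ * (P * K i - K i * a) =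
        (K i)ᴴ * (P * P) * K i - ((K i)ᴴ * P * K i) * a - a * ((K i)ᴴ * P * K i)
          + a * ((K i)ᴴ * K i) * a := by
      intro i
      simp only [Matrix.conjTranspose_sub, Matrix.conjTranspose_mul, hPH, ha, Matrix.mul_sub,
        Matrix.sub_mul, Matrix.mul_assoc]
      abel
    simp only [this, Finset.sum_add_distrib, Finset.sum_sub_distrib, ← Finset.sum_mul,
      ← Finset.mul_sum, ← Matrix.mul_sum, ← Matrix.sum_mul, hA, hA2, hK]
    simp
  have hz' : ∀ i, P * K i - K i * a = 0 := by
    intro i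
    have h1 := (Finset.sum_eq_zero_iff_of_nonneg (s := Finset.univ)
      (f := fun i => ((P * K i - K i * a)ᴴ * (P * K i - K i * a)).trace)
      (fun i _ => (Matrix.posSemidef_conjTranspose_mul_self _).trace_nonneg)).1
      (by rw [← Matrix.trace_sum, hz, Matrix.trace_zero]) i (Finset.mem_univ i)
    exact Matrix.trace_conjTranspose_mul_self_eq_zero_iff.1 h1
  have hc : ∀ i, P * K i = K i * a := fun i => sub_eq_zero.1 (hz' i)
  have hc' : ∀ i, (K i)ᴴ * P = a * (K i)ᴴ := by
    intro i
    have := congrArg Matrix.conjTranspose (hc i)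
    simpa [Matrix.conjTranspose_mul, hPH, ha] using this
  have hPQ : P * ((1 : Mat 2) ⊗ₖ b) = ((1 : Mat 2) ⊗ₖ b) * P := by
    rw [hP, ← Matrix.mul_kronecker_mul, ← Matrix.mul_kronecker_mul]; simp
  have e1 : a * b = ∑ i, (K i)ᴴ * (P * ((1 : Mat 2) ⊗ₖ b)) * K i := by
    conv_lhs => rw [← hB]
    rw [Matrix.mul_sum]
    refine Finset.sum_congr rfl fun i _ => ?_
    simp only [← Matrix.mul_assoc, hc']
  have e2 : b * a = ∑ i, (K i)ᴴ * (((1 : Mat 2) ⊗ₖ b) * P) * K i := by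
    conv_lhs => rw [← hB]
    rw [Matrix.sum_mul]
    refine Finset.sum_congr rfl fun i _ => ?_
    simp only [Matrix.mul_assoc, hc]
  rw [e1, e2, hPQ]

def qbE (j : Fin 2) : Matrix (Fin 2 × Fin 2) (Fin 2) ℂ :=
  Matrix.of fun p i => if p.1 = j ∧ p.2 = j ∧ i = j then 1 else 0

def qbL : Matrix (Fin 2 × Fin 2) (Fin 2) ℂ :=
  Matrix.of fun p i => if p.1 = 0 ∧ p.2 = i then 1 else 0

def qbR : Matrix (Fin 2 × Fin 2) (Fin 2) ℂ :=
  Matrix.of fun p i => if p.2 = 0 ∧ p.1 = i then 1 else 0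

lemma qbL_b (b : Mat 2) : qbLᴴ * ((1 : Mat 2) ⊗ₖ b) * qbL = b := by
  ext i j
  fin_cases i <;> fin_cases j <;>
    simp [qbL, Matrix.mul_apply, Fintype.sum_prod_type, Fin.sum_univ_two, Matrix.one_apply]

lemma qbR_b (b : Mat 2) : qbRᴴ * (b ⊗ₖ (1 : Mat 2)) * qbR = b := by
  ext i j
  fin_cases i <;> fin_cases j <;>
    simp [qbR, Matrix.mul_apply, Fintype.sum_prod_type, Fin.sum_univ_two, Matrix.one_apply]

lemma qbE_l (d : Fin 2 → ℂ) :
    ∑ j, (qbE j)ᴴ * (diagonal d ⊗ₖ (1 : Mat 2)) * qbE j = diagonal d := by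
  ext i j
  fin_cases i <;> fin_cases j <;>
    simp [qbE, Matrix.mul_apply, Fintype.sum_prod_type, Fin.sum_univ_two, Matrix.one_apply]

lemma qbE_r (d : Fin 2 → ℂ) :
    ∑ j, (qbE j)ᴴ * ((1 : Mat 2) ⊗ₖ diagonal d) * qbE j = diagonal d := by
  ext i j
  fin_cases i <;> fin_cases j <;>
    simp [qbE, Matrix.mul_apply, Fintype.sum_prod_type, Fin.sum_univ_two, Matrix.one_apply]

lemma qb_diag (a : Mat 2) (ha : a.IsHermitian) :
    ∃ (K : Fin 2 → Matrix (Fin 2 × Fin 2) (Fin 2) ℂ),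
      (∑ i, (K i)ᴴ * K i = 1) ∧
      (∑ i, (K i)ᴴ * (a ⊗ₖ (1 : Mat 2)) * K i = a) ∧
      (∑ i, (K i)ᴴ * ((1 : Mat 2) ⊗ₖ a) * K i = a) := by
  obtain ⟨U, d, hU, hU', hd⟩ : ∃ (U : Mat 2) (d : Fin 2 → ℂ), Uᴴ * U = 1 ∧ U * Uᴴ = 1 ∧
      a = U * diagonal d * Uᴴ := by
    refine ⟨ha.eigenvectorUnitary, RCLike.ofReal ∘ ha.eigenvalues, ?_, ?_, ?_⟩
    rotate_left 2
    · have := ha.spectral_theorem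
      rw [Unitary.conjStarAlgAut_apply] at this
      exact this
    · exact Unitary.coe_star_mul_self ha.eigenvectorUnitary
    · exact Unitary.coe_mul_star_self ha.eigenvectorUnitary
  have hd' : Uᴴ * a * U = diagonal d := by
    rw [hd]
    simp only [Matrix.mul_assoc, hU, Matrix.mul_one]
    rw [← Matrix.mul_assoc, hU, Matrix.one_mul]
  have key : ∀ (X : Matrix (Fin 2 × Fin 2) (Fin 2 × Fin 2) ℂ) (D : Mat 2),
      ∑ i, (qbE i)ᴴ * ((U ⊗ₖ U)ᴴ * X * (U ⊗ₖ U)) * qbE i = D →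
      ∑ i, ((U ⊗ₖ U) * qbE i * Uᴴ)ᴴ * X * ((U ⊗ₖ U) * qbE i * Uᴴ) = U * D * Uᴴ := by
    intro X D h
    rw [← h, Matrix.mul_sum, Matrix.sum_mul]
    refine Finset.sum_congr rfl fun i _ => ?_
    simp only [Matrix.conjTranspose_mul, Matrix.conjTranspose_conjTranspose, Matrix.mul_assoc]
  have kl : ∀ x y : Mat 2, (U ⊗ₖ U)ᴴ * (x ⊗ₖ y) * (U ⊗ₖ U) = (Uᴴ * x * U) ⊗ₖ (Uᴴ * y * U) := by
    intro x y
    rw [Matrix.conjTranspose_kronecker, ← Matrix.mul_kronecker_mul, ← Matrix.mul_kronecker_mul]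
  have h1 : Uᴴ * (1 : Mat 2) * U = 1 := by rw [Matrix.mul_one, hU]
  refine ⟨fun i => (U ⊗ₖ U) * qbE i * Uᴴ, ?_, ?_, ?_⟩
  · have := key ((1 : Mat 2) ⊗ₖ (1 : Mat 2)) 1 (by
      rw [kl, h1]
      simpa using qbE_l (fun _ => 1))
    simpa [hU'] using this
  · have := key (a ⊗ₖ (1 : Mat 2)) (diagonal d) (by rw [kl, h1, hd']; exact qbE_l d)
    rwa [← hd] at this
  · have := key ((1 : Mat 2) ⊗ₖ a) (diagonal d) (by rw [kl, h1, hd']; exact qbE_r d)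
    rwa [← hd] at this

/-- Two qubit observables are one-side broadcastable iff they are
mutually commuting. -/
theorem qubit_one_side_broadcastable_iff_mutually_commuting
    {ΩA ΩB : Type} [Fintype ΩA] [Fintype ΩB]
    (A : ΩA → Mat 2) (B : ΩB → Mat 2)
    (hApos : ∀ x, (A x).PosSemidef) (hAsum : ∑ x, A x = 1)
    (hBpos : ∀ y, (B y).PosSemidef) (hBsum : ∑ y, B y = 1) :
    (∃ (m : ℕ) (K : Fin m → Matrix (Fin 2 × Fin 2) (Fin 2) ℂ),
      (∑ i, (K i)ᴴ * K i = 1) ∧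
      (∀ x, ∑ i, (K i)ᴴ * (A x ⊗ₖ (1 : Mat 2)) * K i = A x) ∧
      (∀ y, ∑ i, (K i)ᴴ * ((1 : Mat 2) ⊗ₖ B y) * K i = B y)) ↔
    (∀ x y, A x * B y = B y * A x) := by
  constructor
  · rintro ⟨m, K, hK, hA, hB⟩ x y
    exact qb_commute K hK (A x) (B y) (hApos x).1 (hA x) (hB y)
  intro hc
  by_cases hAs : ∀ x, ∃ c : ℂ, A x = c • (1 : Mat 2)
  · have h1 : qbLᴴ * qbL = 1 := by simpa using qbL_b 1
    refine ⟨1, fun _ => qbL, by simpa using h1, fun x => ?_, fun y => by simpa using qbL_b (B y)⟩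
    obtain ⟨c, h⟩ := hAs x
    rw [h]
    simp [Matrix.smul_kronecker, h1]
  by_cases hBs : ∀ x, ∃ c : ℂ, B x = c • (1 : Mat 2)
  · have h1 : qbRᴴ * qbR = 1 := by simpa using qbR_b 1
    refine ⟨1, fun _ => qbR, by simpa using h1, fun y => by simpa using qbR_b (A y), fun x => ?_⟩
    obtain ⟨c, h⟩ := hBs x
    rw [h]
    simp [Matrix.kronecker_smul, h1]
  obtain ⟨x0, hx0⟩ := not_forall.1 hAs
  obtain ⟨y0, hy0⟩ := not_forall.1 hBs
  obtain ⟨K, hK, hKl, hKr⟩ := qb_diag (A x0) (hApos x0).1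
  refine ⟨2, K, hK, fun x => ?_, fun y => ?_⟩
  · obtain ⟨s, t, h⟩ := qb_span (hc x0 y0) hx0
    obtain ⟨s', t', h'⟩ := qb_span (hc x y0).symm hy0
    have h2 : A x = (s' + t' * s) • (1 : Mat 2) + (t' * t) • A x0 := by
      rw [h', h]; module
    rw [h2]
    simp only [Matrix.add_kronecker, Matrix.smul_kronecker, Matrix.mul_add, Matrix.add_mul,
      Finset.sum_add_distrib, Matrix.mul_smul, Matrix.smul_mul, ← Finset.smul_sum, hKl,
      Matrix.one_kronecker_one, Matrix.mul_one, hK]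
  · obtain ⟨s, t, h⟩ := qb_span (hc x0 y) hx0
    rw [h]
    simp only [Matrix.kronecker_add, Matrix.kronecker_smul, Matrix.mul_add, Matrix.add_mul,
      Finset.sum_add_distrib, Matrix.mul_smul, Matrix.smul_mul, ← Finset.smul_sum, hKr,
      Matrix.one_kronecker_one, Matrix.mul_one, hK]
end
end

section
/- Let A and B be qubit observables (observables on ℂ²) that are mutually commuting, and suppose neither A nor B is trivial (i.e., for A there exists an outcome x such that A(x) is not a scalar multiple of the identity, and likewise for B). Then A and B are broadcastable: there exists a broadcasting channel Λ with Λ*(A(x) ⊗ 1) = A(x) = Λ*(1 ⊗ A(x)) and Λ*(B(y) ⊗ 1) = B(y) = Λ*(1 ⊗ B(y)) for all outcomes x, y. -/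
open Matrix
open scoped Kronecker ComplexOrder

noncomputable section

/-- Kraus operators broadcasting the orthonormal basis given by the columns of `U`. -/
def krausOf (U : Mat 2) (i : Fin 2) : Matrix (Fin 2 × Fin 2) (Fin 2) ℂ :=
  Matrix.of fun p c => U p.1 i * U p.2 i * star (U c i)

theorem kraus_gram (U : Mat 2) (hU : Uᴴ * U = 1) (i a b : Fin 2) :
    ((krausOf U i)ᴴ * krausOf U i) a b = U a i * star (U b i) := by
  have h := congrFun (congrFun hU i) i
  simp only [Matrix.mul_apply, Fin.sum_univ_two, Matrix.conjTranspose_apply,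
    Matrix.one_apply_eq] at h
  simp only [krausOf, Matrix.mul_apply, Fintype.sum_prod_type, Fin.sum_univ_two,
    Matrix.conjTranspose_apply, Matrix.of_apply, star_mul', star_star]
  linear_combination (U a i * star (U b i)) *
    ((star (U 0 i) * U 0 i + star (U 1 i) * U 1 i) + 1) * h

theorem kraus_left (U M : Mat 2) (d : Fin 2 → ℂ) (h : M * U = U * diagonal d) (i : Fin 2) :
    (M ⊗ₖ (1 : Mat 2)) * krausOf U i = d i • krausOf U i := by
  ext ⟨p, q⟩ c
  have h := congrFun (congrFun h p) i
  rw [Matrix.mul_diagonal] at h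
  simp only [Matrix.mul_apply, Fin.sum_univ_two] at h
  fin_cases q <;>
  simp [krausOf, Matrix.mul_apply, Fintype.sum_prod_type, Fin.sum_univ_two,
    Matrix.kroneckerMap_apply, Matrix.one_apply] <;>
  first
  | linear_combination (U 0 i * (starRingEnd ℂ) (U c i)) * h
  | linear_combination (U 1 i * (starRingEnd ℂ) (U c i)) * h

theorem kraus_right (U M : Mat 2) (d : Fin 2 → ℂ) (h : M * U = U * diagonal d) (i : Fin 2) :
    ((1 : Mat 2) ⊗ₖ M) * krausOf U i = d i • krausOf U i := by
  ext ⟨p, q⟩ c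
  have h := congrFun (congrFun h q) i
  rw [Matrix.mul_diagonal] at h
  simp only [Matrix.mul_apply, Fin.sum_univ_two] at h
  fin_cases p <;>
  simp [krausOf, Matrix.mul_apply, Fintype.sum_prod_type, Fin.sum_univ_two,
    Matrix.kroneckerMap_apply, Matrix.one_apply] <;>
  first
  | linear_combination (U 0 i * (starRingEnd ℂ) (U c i)) * h
  | linear_combination (U 1 i * (starRingEnd ℂ) (U c i)) * h

theorem kraus_sum_s15 (U M : Mat 2) (d : Fin 2 → ℂ) (hU : Uᴴ * U = 1)
    (h : M * U = U * diagonal d) :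
    ∑ i, d i • ((krausOf U i)ᴴ * krausOf U i) = M := by
  have hU' : U * Uᴴ = 1 := mul_eq_one_comm.mp hU
  have hM : M = U * diagonal d * Uᴴ := by
    rw [← h, Matrix.mul_assoc, hU', Matrix.mul_one]
  rw [hM]
  ext a b
  simp only [Fin.sum_univ_two, Matrix.add_apply, Matrix.smul_apply, kraus_gram U hU,
    smul_eq_mul]
  rw [Matrix.mul_apply]
  simp only [Fin.sum_univ_two, Matrix.mul_diagonal, Matrix.conjTranspose_apply]
  ring

theorem kraus_broadcast (U M : Mat 2) (d : Fin 2 → ℂ) (hU : Uᴴ * U = 1)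
    (h : M * U = U * diagonal d) :
    (∑ i, (krausOf U i)ᴴ * (M ⊗ₖ (1 : Mat 2)) * krausOf U i = M) ∧
    (∑ i, (krausOf U i)ᴴ * ((1 : Mat 2) ⊗ₖ M) * krausOf U i = M) := by
  constructor
  · simp only [Matrix.mul_assoc, kraus_left U M d h, Matrix.mul_smul]
    exact kraus_sum_s15 U M d hU h
  · simp only [Matrix.mul_assoc, kraus_right U M d h, Matrix.mul_smul]
    exact kraus_sum_s15 U M d hU h

/-- A matrix commuting with a nonscalar matrix diagonalized by `U` is diagonalized by `U`. -/
theorem diag_of_commute (U N M : Mat 2) (d : Fin 2 → ℂ) (hU : Uᴴ * U = 1)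
    (h : N * U = U * diagonal d) (hN : ¬ ∃ c : ℂ, N = c • (1 : Mat 2))
    (hc : N * M = M * N) : ∃ e : Fin 2 → ℂ, M * U = U * diagonal e := by
  have hU' : U * Uᴴ = 1 := mul_eq_one_comm.mp hU
  have hd : d 0 ≠ d 1 := by
    intro hd
    apply hN
    refine ⟨d 0, ?_⟩
    have h1 : diagonal d = d 0 • (1 : Mat 2) := by
      ext i j
      fin_cases i <;> fin_cases j <;> simp [hd]
    calc N = N * (U * Uᴴ) := by rw [hU', Matrix.mul_one]
      _ = d 0 • (1 : Mat 2) := by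
        rw [← Matrix.mul_assoc, h, h1, Matrix.mul_smul, Matrix.mul_one, Matrix.smul_mul, hU']
  have h2 : diagonal d = Uᴴ * N * U := by
    rw [Matrix.mul_assoc, h, ← Matrix.mul_assoc, hU, Matrix.one_mul]
  have hcd : diagonal d * (Uᴴ * M * U) = (Uᴴ * M * U) * diagonal d := by
    rw [h2]
    calc Uᴴ * N * U * (Uᴴ * M * U) = Uᴴ * N * (U * Uᴴ) * M * U := by
          simp only [Matrix.mul_assoc]
      _ = Uᴴ * (N * M) * U := by rw [hU']; simp only [Matrix.mul_assoc, Matrix.one_mul]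
      _ = Uᴴ * M * (U * Uᴴ) * N * U := by
          rw [hc, hU']; simp only [Matrix.mul_assoc, Matrix.one_mul]
      _ = _ := by simp only [Matrix.mul_assoc]
  have hMU : M * U = U * (Uᴴ * M * U) := by
    rw [← Matrix.mul_assoc, ← Matrix.mul_assoc, hU', Matrix.one_mul]
  generalize Uᴴ * M * U = L at hcd hMU
  refine ⟨fun i => L i i, ?_⟩
  rw [hMU]
  congr 1
  have h01 := congrFun (congrFun hcd 0) 1
  have h10 := congrFun (congrFun hcd 1) 0
  rw [Matrix.diagonal_mul, Matrix.mul_diagonal] at h01 h10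
  have e01 : L 0 1 = 0 := by
    have : (d 0 - d 1) * L 0 1 = 0 := by linear_combination h01
    exact (mul_eq_zero.mp this).resolve_left (sub_ne_zero.mpr hd)
  have e10 : L 1 0 = 0 := by
    have : (d 0 - d 1) * L 1 0 = 0 := by linear_combination -h10
    exact (mul_eq_zero.mp this).resolve_left (sub_ne_zero.mpr hd)
  ext i j
  fin_cases i <;> fin_cases j <;> simp [e01, e10]

/-- Mutually commuting qubit observables, neither of which is trivial,
are broadcastable. -/
theorem qubit_mutually_commuting_nontrivial_broadcastable
    {ΩA ΩB : Type} [Fintype ΩA] [Fintype ΩB]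
    (A : ΩA → Mat 2) (B : ΩB → Mat 2)
    (hApos : ∀ x, (A x).PosSemidef) (hAsum : ∑ x, A x = 1)
    (hBpos : ∀ y, (B y).PosSemidef) (hBsum : ∑ y, B y = 1)
    (hcomm : ∀ x y, A x * B y = B y * A x)
    (hAnt : ∃ x, ¬ ∃ c : ℂ, A x = c • (1 : Mat 2))
    (hBnt : ∃ y, ¬ ∃ c : ℂ, B y = c • (1 : Mat 2)) :
    ∃ (m : ℕ) (K : Fin m → Matrix (Fin 2 × Fin 2) (Fin 2) ℂ),
      (∑ i, (K i)ᴴ * K i = 1) ∧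
      (∀ x,
        (∑ i, (K i)ᴴ * (A x ⊗ₖ (1 : Mat 2)) * K i = A x) ∧
        (∑ i, (K i)ᴴ * ((1 : Mat 2) ⊗ₖ A x) * K i = A x)) ∧
      (∀ y,
        (∑ i, (K i)ᴴ * (B y ⊗ₖ (1 : Mat 2)) * K i = B y) ∧
        (∑ i, (K i)ᴴ * ((1 : Mat 2) ⊗ₖ B y) * K i = B y)) := by
  obtain ⟨x0, hx0⟩ := hAnt
  obtain ⟨y0, hy0⟩ := hBnt
  have hH : (A x0).IsHermitian := (hApos x0).1
  obtain ⟨U, d, hU, hd⟩ : ∃ (U : Mat 2) (d : Fin 2 → ℂ), Uᴴ * U = 1 ∧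
      A x0 * U = U * diagonal d := by
    have hu : (hH.eigenvectorUnitary : Mat 2)ᴴ * (hH.eigenvectorUnitary : Mat 2) = 1 :=
      Unitary.coe_star_mul_self hH.eigenvectorUnitary
    refine ⟨hH.eigenvectorUnitary, fun i => (hH.eigenvalues i : ℂ), hu, ?_⟩
    ext a i
    have := congrFun (hH.mulVec_eigenvectorBasis i) a
    rw [Matrix.mul_diagonal]
    simp only [Matrix.mulVec, dotProduct, Pi.smul_apply] at this
    simp only [Matrix.mul_apply, hH.eigenvectorUnitary_apply]
    rw [this, Complex.real_smul, mul_comm]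
  have hB : ∀ y, ∃ e : Fin 2 → ℂ, B y * U = U * diagonal e := fun y =>
    diag_of_commute U (A x0) (B y) d hU hd hx0 (hcomm x0 y)
  obtain ⟨f, hf⟩ := hB y0
  have hA : ∀ x, ∃ e : Fin 2 → ℂ, A x * U = U * diagonal e := fun x =>
    diag_of_commute U (B y0) (A x) f hU hf hy0 (hcomm x y0).symm
  refine ⟨2, krausOf U, ?_, fun x => ?_, fun y => ?_⟩
  · have := kraus_sum_s15 U 1 (fun _ => 1) hU (by simp)
    simpa using this
  · obtain ⟨e, he⟩ := hA x
    exact kraus_broadcast U _ e hU he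
  · obtain ⟨e, he⟩ := hB y
    exact kraus_broadcast U _ e hU he
end
end

section
/- One-side broadcastable observables are mutually nondisturbing: if A and B are observables on ℂ^n and there exists a broadcasting channel Λ with Λ*(A(x) ⊗ 1) = A(x) and Λ*(1 ⊗ B(y)) = B(y) for all outcomes x, y, then A can be measured without disturbing B and B can be measured without disturbing A. -/
open Matrix
open scoped Kronecker ComplexOrder

noncomputable section

/-- The operator `⟨a| S ⊗ 1`. -/
def slice {n : ℕ} (S : Mat n) (a : Fin n) : Matrix (Fin n) (Fin n × Fin n) ℂ :=
  Matrix.of fun b p => if b = p.2 then S a p.1 else 0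

lemma slice_sum {n : ℕ} (S X : Mat n) :
    ∑ a, (slice S a)ᴴ * X * slice S a = (Sᴴ * S) ⊗ₖ X := by
  ext ⟨p, q⟩ ⟨r, s⟩
  simp only [Matrix.sum_apply, Matrix.mul_apply, slice, Matrix.conjTranspose_apply,
    Matrix.of_apply, Matrix.kroneckerMap_apply, Finset.sum_mul]
  refine Finset.sum_congr rfl fun a _ => ?_
  simp [apply_ite, ite_mul]
  ring

open scoped MatrixOrder Matrix.Norms.L2Operator in
lemma half {n : ℕ} {ΩA ΩB : Type} [Fintype ΩA] [Fintype ΩB]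
    (A : ΩA → Mat n) (B : ΩB → Mat n)
    (hApos : ∀ x, (A x).PosSemidef) (hAsum : ∑ x, A x = 1)
    (m : ℕ) (K : Fin m → Matrix (Fin n × Fin n) (Fin n) ℂ)
    (hA : ∀ x, ∑ i, (K i)ᴴ * (A x ⊗ₖ (1 : Mat n)) * K i = A x)
    (hB : ∀ y, ∑ i, (K i)ᴴ * ((1 : Mat n) ⊗ₖ B y) * K i = B y) :
    CanMeasureWithoutDisturbing A B := by
  have hS : ∀ x, ∃ S : Mat n, A x = Sᴴ * S := fun x =>
    CStarAlgebra.nonneg_iff_eq_star_mul_self.mp (hApos x).nonneg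
  choose S hS using hS
  have key : ∀ x (X : Mat n),
      ∑ j : Fin (m * n), (slice (S x) (finProdFinEquiv.symm j).2 * K (finProdFinEquiv.symm j).1)ᴴ
        * X * (slice (S x) (finProdFinEquiv.symm j).2 * K (finProdFinEquiv.symm j).1)
      = ∑ i, (K i)ᴴ * (A x ⊗ₖ X) * K i := by
    intro x X
    rw [Equiv.sum_comp finProdFinEquiv.symm (fun j : Fin m × Fin n =>
      (slice (S x) j.2 * K j.1)ᴴ * X * (slice (S x) j.2 * K j.1)), Fintype.sum_prod_type]
    refine Finset.sum_congr rfl fun i _ => ?_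
    rw [hS, ← slice_sum, Matrix.mul_sum, Matrix.sum_mul]
    refine Finset.sum_congr rfl fun a _ => ?_
    simp only [Matrix.conjTranspose_mul, Matrix.mul_assoc]
  refine ⟨m * n, fun x j =>
    slice (S x) (finProdFinEquiv.symm j).2 * K (finProdFinEquiv.symm j).1, fun x => ?_, fun y => ?_⟩
  · have h := key x 1
    rw [hA] at h
    simpa only [Matrix.mul_one] using h
  · simp only [key]
    rw [Finset.sum_comm]
    conv_rhs => rw [← hB y]
    refine Finset.sum_congr rfl fun i _ => ?_
    rw [← Matrix.sum_mul, ← Matrix.mul_sum, ← hAsum]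
    congr 2
    ext ⟨p, q⟩ ⟨r, s⟩
    simp [Matrix.sum_apply, Matrix.kroneckerMap_apply, Finset.sum_mul]

lemma swap_conj {n : ℕ} (L : Matrix (Fin n × Fin n) (Fin n) ℂ) (X Y : Mat n) :
    (L.submatrix Prod.swap id)ᴴ * (X ⊗ₖ Y) * L.submatrix Prod.swap id
      = Lᴴ * (Y ⊗ₖ X) * L := by
  have h : X ⊗ₖ Y = (Y ⊗ₖ X).submatrix (Equiv.prodComm (Fin n) (Fin n))
      (Equiv.prodComm (Fin n) (Fin n)) := by
    ext ⟨p, q⟩ ⟨r, s⟩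
    simp [Matrix.kroneckerMap_apply, mul_comm]
  have h2 : L.submatrix Prod.swap id = L.submatrix (Equiv.prodComm (Fin n) (Fin n)) id := rfl
  rw [h, h2, Matrix.conjTranspose_submatrix, Matrix.submatrix_mul_equiv,
    Matrix.submatrix_mul_equiv, Matrix.submatrix_id_id]

/-- One-side broadcastable observables are mutually nondisturbing. -/
theorem one_side_broadcastable_implies_mutually_nondisturbing {n : ℕ}
    {ΩA ΩB : Type} [Fintype ΩA] [Fintype ΩB]
    (A : ΩA → Mat n) (B : ΩB → Mat n)
    (hApos : ∀ x, (A x).PosSemidef) (hAsum : ∑ x, A x = 1)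
    (hBpos : ∀ y, (B y).PosSemidef) (hBsum : ∑ y, B y = 1)
    (hbc : ∃ (m : ℕ) (K : Fin m → Matrix (Fin n × Fin n) (Fin n) ℂ),
      (∑ i, (K i)ᴴ * K i = 1) ∧
      (∀ x, ∑ i, (K i)ᴴ * (A x ⊗ₖ (1 : Mat n)) * K i = A x) ∧
      (∀ y, ∑ i, (K i)ᴴ * ((1 : Mat n) ⊗ₖ B y) * K i = B y)) :
    CanMeasureWithoutDisturbing A B ∧ CanMeasureWithoutDisturbing B A := by
  obtain ⟨m, K, -, hA, hB⟩ := hbc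
  refine ⟨half A B hApos hAsum m K hA hB,
    half B A hBpos hBsum m (fun i => (K i).submatrix Prod.swap id) ?_ ?_⟩
  · intro y
    simpa only [swap_conj] using hB y
  · intro x
    simpa only [swap_conj] using hA x
end
end

section
/- An informationally complete observable is not broadcastable: let n ≥ 2 and let A be an informationally complete observable on ℂ^n. Then there is no broadcasting channel Λ with Λ*(A(x) ⊗ 1) = A(x) = Λ*(1 ⊗ A(x)) for every outcome x. -/
open Matrix
open scoped Kronecker ComplexOrder

noncomputable section

/-- An observable is informationally complete if its outcome statistics separate
density matrices. -/
def InfoComplete {n : ℕ} {ΩA : Type} [Fintype ΩA] (A : ΩA → Mat n) : Prop :=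
  ∀ ρ σ : Mat n, ρ.PosSemidef → ρ.trace = 1 → σ.PosSemidef → σ.trace = 1 →
    (∀ x, (ρ * A x).trace = (σ * A x).trace) → ρ = σ

lemma ic_aux {n : ℕ} (hn : 2 ≤ n)
    {ΩA : Type} [Fintype ΩA] (A : ΩA → Mat n)
    (hApos : ∀ x, (A x).PosSemidef) (hAsum : ∑ x, A x = 1)
    (hIC : InfoComplete A) (T : Mat n) (hT : ∀ x, (T * A x).trace = 0) : T + Tᴴ = 0 := by
  have hT' : ∀ x, (Tᴴ * A x).trace = 0 := by
    intro x
    have h := congrArg star (hT x)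
    rw [← trace_conjTranspose, conjTranspose_mul, (hApos x).1.eq, trace_mul_comm] at h
    simpa using h
  have h1 : T.trace = 0 := by
    have : (T * ∑ x, A x).trace = 0 := by
      rw [Matrix.mul_sum, trace_sum]; exact Finset.sum_eq_zero fun x _ => hT x
    simpa [hAsum] using this
  have h2 : Tᴴ.trace = 0 := by rw [trace_conjTranspose, h1, star_zero]
  have p1 : ((1 + T)ᴴ * (1 + T)).PosSemidef := posSemidef_conjTranspose_mul_self _
  have p3 : (Tᴴ * T).PosSemidef := posSemidef_conjTranspose_mul_self _
  have p2 : (1 + Tᴴ * T).PosSemidef := PosSemidef.one.add p3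
  have e : (1 + T)ᴴ * (1 + T) = (1 + Tᴴ * T) + (T + Tᴴ) := by
    rw [conjTranspose_add, conjTranspose_one]; noncomm_ring
  set t : ℂ := (1 + Tᴴ * T).trace with ht
  have et : ((1 + T)ᴴ * (1 + T)).trace = t := by
    rw [e, trace_add, trace_add T, h1, h2]; simp [ht]
  have tpos : 0 < t := by
    rw [ht, trace_add, trace_one, Fintype.card_fin]
    have : (0 : ℂ) < n := by exact_mod_cast (by omega : 0 < n)
    exact add_pos_of_pos_of_nonneg this p3.trace_nonneg
  have ti : 0 ≤ t⁻¹ := (inv_pos.2 tpos).le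
  have key := hIC (t⁻¹ • ((1 + T)ᴴ * (1 + T))) (t⁻¹ • (1 + Tᴴ * T)) (p1.smul ti)
    (by rw [trace_smul, et, smul_eq_mul, inv_mul_cancel₀ tpos.ne'])
    (p2.smul ti) (by rw [trace_smul, ← ht, smul_eq_mul, inv_mul_cancel₀ tpos.ne'])
    (by
      intro x
      rw [e, smul_mul, smul_mul, trace_smul, trace_smul, add_mul _ (T + Tᴴ), add_mul T,
        trace_add, trace_add (T * A x), hT, hT']
      simp)
  have key2 := smul_right_injective _ (inv_ne_zero tpos.ne') key
  simp only [e] at key2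
  simpa using key2

lemma ic_span {n : ℕ} (hn : 2 ≤ n)
    {ΩA : Type} [Fintype ΩA] (A : ΩA → Mat n)
    (hApos : ∀ x, (A x).PosSemidef) (hAsum : ∑ x, A x = 1)
    (hIC : InfoComplete A) : Submodule.span ℂ (Set.range A) = ⊤ := by
  by_contra hne
  obtain ⟨f, hf, hle⟩ := Submodule.exists_le_ker_of_lt_top _ (lt_top_iff_ne_top.2 hne)
  let T : Mat n := Matrix.of fun j i => f (Matrix.single i j 1)
  have hfT : ∀ X, f X = (T * X).trace := by
    intro X
    conv_lhs => rw [Matrix.matrix_eq_sum_single X]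
    simp only [map_sum, Matrix.trace, Matrix.diag, Matrix.mul_apply, T, Matrix.of_apply]
    rw [Finset.sum_comm]
    refine Finset.sum_congr rfl fun i _ => Finset.sum_congr rfl fun j _ => ?_
    have : Matrix.single j i (X j i) = (X j i) • (Matrix.single j i (1:ℂ) : Mat n) := by simp
    rw [this, map_smul, smul_eq_mul, mul_comm]
  have hT : ∀ x, (T * A x).trace = 0 := by
    intro x
    rw [← hfT]
    exact hle (Submodule.subset_span ⟨x, rfl⟩)
  have a1 := ic_aux hn A hApos hAsum hIC T hT
  have a2 := ic_aux hn A hApos hAsum hIC (Complex.I • T) (by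
    intro x; rw [smul_mul, trace_smul, hT, smul_zero])
  have hT0 : T = 0 := by
    ext i j
    have b1 := congrFun (congrFun a1 i) j
    have b2 := congrFun (congrFun a2 i) j
    simp [conjTranspose_apply] at b1 b2
    have h3 : Complex.I * (T i j - star (T j i)) = 0 := by
      simp only [← starRingEnd_apply]; linear_combination b2
    have h4 := (mul_eq_zero.1 h3).resolve_left Complex.I_ne_zero
    simp only [← starRingEnd_apply] at h4
    simp only [Matrix.zero_apply]
    linear_combination (b1 + h4) / 2
  apply hf
  ext X
  simp [hfT, hT0]

/-- Multiplicative domain argument. -/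
lemma mult_dom {n m : ℕ} (K : Fin m → Matrix (Fin n × Fin n) (Fin n) ℂ)
    (X : Mat n) (Y : Matrix (Fin n × Fin n) (Fin n × Fin n) ℂ)
    (h0 : ∑ i, (K i)ᴴ * K i = 1)
    (h1 : ∑ i, (K i)ᴴ * Y * K i = X)
    (h2 : ∑ i, (K i)ᴴ * Yᴴ * K i = Xᴴ)
    (h3 : ∑ i, (K i)ᴴ * (Yᴴ * Y) * K i = Xᴴ * X) (i : Fin m) : Y * K i = K i * X := by
  have hs : ∑ i, (Y * K i - K i * X)ᴴ * (Y * K i - K i * X) = 0 := by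
    have : ∀ i, (Y * K i - K i * X)ᴴ * (Y * K i - K i * X) =
        (K i)ᴴ * (Yᴴ * Y) * K i - ((K i)ᴴ * Yᴴ * K i) * X - Xᴴ * ((K i)ᴴ * Y * K i)
          + Xᴴ * ((K i)ᴴ * K i) * X := by
      intro i
      simp only [conjTranspose_sub, conjTranspose_mul, Matrix.sub_mul, Matrix.mul_sub,
        Matrix.mul_assoc]
      abel
    simp only [this, Finset.sum_add_distrib, Finset.sum_sub_distrib, ← Matrix.sum_mul,
      ← Matrix.mul_sum, h0, h1, h2, h3]
    simp
  have ht := congrArg Matrix.trace hs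
  rw [trace_sum, trace_zero, Finset.sum_eq_zero_iff_of_nonneg
    (fun i _ => (posSemidef_conjTranspose_mul_self _).trace_nonneg)] at ht
  have := ht i (Finset.mem_univ _)
  rw [trace_conjTranspose_mul_self_eq_zero_iff] at this
  exact sub_eq_zero.1 this

theorem info_complete_not_broadcastable {n : ℕ} (hn : 2 ≤ n)
    {ΩA : Type} [Fintype ΩA] (A : ΩA → Mat n)
    (hApos : ∀ x, (A x).PosSemidef) (hAsum : ∑ x, A x = 1)
    (hIC : InfoComplete A) :
    ¬ ∃ (m : ℕ) (K : Fin m → Matrix (Fin n × Fin n) (Fin n) ℂ),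
      (∑ i, (K i)ᴴ * K i = 1) ∧
      ∀ x,
        (∑ i, (K i)ᴴ * (A x ⊗ₖ (1 : Mat n)) * K i = A x) ∧
        (∑ i, (K i)ᴴ * ((1 : Mat n) ⊗ₖ A x) * K i = A x) := by
  rintro ⟨m, K, hK, hA⟩
  have hall : ∀ X : Mat n, (∑ i, (K i)ᴴ * (X ⊗ₖ (1 : Mat n)) * K i = X) ∧
        (∑ i, (K i)ᴴ * ((1 : Mat n) ⊗ₖ X) * K i = X) := by
    intro X
    have hX : X ∈ Submodule.span ℂ (Set.range A) := by
      rw [ic_span hn A hApos hAsum hIC]; trivial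
    induction hX using Submodule.span_induction with
    | mem x h => obtain ⟨x, rfl⟩ := h; exact hA x
    | zero => simp
    | add x y _ _ hx hy =>
      simp only [add_kronecker, kronecker_add, Matrix.mul_add, Matrix.add_mul,
        Finset.sum_add_distrib, hx.1, hx.2, hy.1, hy.2, and_self]
    | smul c x _ hx =>
      simp only [smul_kronecker, kronecker_smul, Matrix.mul_smul, Matrix.smul_mul,
        ← Finset.smul_sum, hx.1, hx.2, and_self]
  have hL : ∀ (X : Mat n) i, (X ⊗ₖ (1 : Mat n)) * K i = K i * X := fun X i =>
    mult_dom K X _ hK (hall X).1 (by rw [conjTranspose_kronecker, conjTranspose_one]; exact (hall _).1)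
      (by rw [conjTranspose_kronecker, conjTranspose_one, ← mul_kronecker_mul, Matrix.one_mul]
          exact (hall _).1) i
  have hR : ∀ (X : Mat n) i, ((1 : Mat n) ⊗ₖ X) * K i = K i * X := fun X i =>
    mult_dom K X _ hK (hall X).2 (by rw [conjTranspose_kronecker, conjTranspose_one]; exact (hall _).2)
      (by rw [conjTranspose_kronecker, conjTranspose_one, ← mul_kronecker_mul, Matrix.one_mul]
          exact (hall _).2) i
  have hcomm : ∀ (X Y : Mat n) i, K i * (X * Y) = K i * (Y * X) := by
    intro X Y i
    have e1 : (X ⊗ₖ Y) * K i = K i * (X * Y) := by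
      rw [← Matrix.mul_assoc, ← hL, Matrix.mul_assoc, ← hR, ← Matrix.mul_assoc,
        ← mul_kronecker_mul, Matrix.one_mul, Matrix.mul_one]
    have e2 : (X ⊗ₖ Y) * K i = K i * (Y * X) := by
      rw [← Matrix.mul_assoc, ← hR, Matrix.mul_assoc, ← hL, ← Matrix.mul_assoc,
        ← mul_kronecker_mul, Matrix.one_mul, Matrix.mul_one]
    rw [← e1, ← e2]
  have hXY : ∀ X Y : Mat n, X * Y = Y * X := by
    intro X Y
    rw [← Matrix.one_mul (X * Y), ← Matrix.one_mul (Y * X), ← hK, Matrix.sum_mul, Matrix.sum_mul]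
    exact Finset.sum_congr rfl fun i _ => by rw [Matrix.mul_assoc, hcomm, Matrix.mul_assoc]
  let a : Fin n := ⟨0, by omega⟩
  let b : Fin n := ⟨1, by omega⟩
  have hab : a ≠ b := by simp [a, b]
  have h := congrFun (congrFun (hXY (Matrix.single a b 1) (Matrix.single b b 1)) a) b
  rw [Matrix.single_mul_single_same, Matrix.single_mul_single_of_ne _ _ _ _ hab.symm] at h
  simp at h
end
end

section
/- An informationally complete observable cannot be measured without disturbing itself: let n ≥ 2 and let A be an informationally complete observable on ℂ^n. Then there is no instrument implementing A, with Kraus families (K_{x,i})_i satisfying ∑_i K_{x,i}ᴴ K_{x,i} = A(x), such that ∑_{x,i} K_{x,i}ᴴ A(x') K_{x,i} = A(x') for every outcome x'. -/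
open Matrix
open scoped Kronecker ComplexOrder

noncomputable section

/-- If the channel fixes a pure state `v vᴴ`, each Kraus operator maps `v` into the orthogonal
complement of every `w` orthogonal to `v`. -/
lemma kraus_orth {n : ℕ} {ι : Type} [Fintype ι] (K : ι → Mat n) (v w : Fin n → ℂ)
    (h : ∑ a, K a * vecMulVec v (star v) * (K a)ᴴ = vecMulVec v (star v))
    (hvw : star w ⬝ᵥ v = 0) (a : ι) : star w ⬝ᵥ (K a *ᵥ v) = 0 := by
  have key : ∀ b, star w ⬝ᵥ ((K b * vecMulVec v (star v) * (K b)ᴴ) *ᵥ w)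
      = (star w ⬝ᵥ (K b *ᵥ v)) * star (star w ⬝ᵥ (K b *ᵥ v)) := by
    intro b
    have h3 : star (star w ⬝ᵥ (K b *ᵥ v)) = star (K b *ᵥ v) ⬝ᵥ w := by
      rw [← star_dotProduct_star, star_star, dotProduct_comm, dotProduct_comm]
    rw [mul_vecMulVec, vecMulVec_mul, ← star_mulVec, vecMulVec_mulVec, h3, dotProduct_smul]
    rfl
  have hs : ∑ b, (star w ⬝ᵥ (K b *ᵥ v)) * star (star w ⬝ᵥ (K b *ᵥ v)) = 0 := by
    simp_rw [← key]
    rw [← dotProduct_sum, ← Matrix.sum_mulVec, h, vecMulVec_mulVec]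
    simp [dotProduct_smul, hvw]
  have h2 := (Finset.sum_eq_zero_iff_of_nonneg (fun b _ => mul_star_self_nonneg _)).1 hs a
    (Finset.mem_univ a)
  simpa using h2

/-- A trace preserving Kraus family that fixes every pure state is made of scalars. -/
lemma kraus_scalar {n : ℕ} {ι : Type} [Fintype ι] (K : ι → Mat n)
    (h : ∀ v : Fin n → ℂ, v ≠ 0 →
      ∑ a, K a * vecMulVec v (star v) * (K a)ᴴ = vecMulVec v (star v))
    (a : ι) (k : Fin n) : K a = K a k k • (1 : Mat n) := by
  have off : ∀ i j, i ≠ j → K a i j = 0 := by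
    intro i j hij
    have := kraus_orth K (Pi.single j 1) (Pi.single i 1) (h _ (by simp))
      (by simp [hij.symm, hij]) a
    simpa [← Pi.single_star] using this
  have diag : ∀ i j, i ≠ j → K a i i = K a j j := by
    intro i j hij
    have := kraus_orth K (Pi.single i 1 + Pi.single j 1) (Pi.single i 1 - Pi.single j 1)
      (h _ (by
        intro h0
        have := congrFun h0 i
        simp [hij] at this))
      (by simp [← Pi.single_star, sub_dotProduct, hij, hij.symm]) a
    simp [← Pi.single_star, sub_dotProduct, mulVec_add, off i j hij, off j i hij.symm] at this
    exact sub_eq_zero.1 this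
  ext i j
  by_cases hij : i = j
  · subst hij
    by_cases hk : i = k
    · subst hk; simp
    · simp [diag i k hk]
  · simp [off i j hij, hij]

/-- An informationally complete observable on ℂ^n (n ≥ 2) cannot be
measured without disturbing itself. -/
theorem info_complete_disturbs_itself {n : ℕ} (hn : 2 ≤ n)
    {ΩA : Type} [Fintype ΩA] (A : ΩA → Mat n)
    (hApos : ∀ x, (A x).PosSemidef) (hAsum : ∑ x, A x = 1)
    (hIC : InfoComplete A) :
    ¬ ∃ (m : ℕ) (K : ΩA → Fin m → Mat n),
      (∀ x, ∑ i, (K x i)ᴴ * K x i = A x) ∧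
      (∀ x', ∑ x, ∑ i, (K x i)ᴴ * A x' * K x i = A x') := by
  rintro ⟨m, K, hK, hD⟩
  let L : ΩA × Fin m → Mat n := fun p => K p.1 p.2
  have hLsum : ∑ p, (L p)ᴴ * L p = 1 := by
    rw [Fintype.sum_prod_type, ← hAsum]
    exact Finset.sum_congr rfl fun x _ => hK x
  have hLD : ∀ x', ∑ p, (L p)ᴴ * A x' * L p = A x' := by
    intro x'
    rw [Fintype.sum_prod_type]
    exact hD x'
  have htr : ∀ (ρ X : Mat n), ((∑ p, L p * ρ * (L p)ᴴ) * X).trace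
      = (ρ * ∑ p, (L p)ᴴ * X * L p).trace := by
    intro ρ X
    rw [Finset.sum_mul, Finset.mul_sum, trace_sum, trace_sum]
    refine Finset.sum_congr rfl fun p _ => ?_
    rw [Matrix.mul_assoc, Matrix.mul_assoc, Matrix.trace_mul_comm]
    simp only [Matrix.mul_assoc]
  have hfix : ∀ ρ : Mat n, ρ.PosSemidef → ρ.trace = 1 → ∑ p, L p * ρ * (L p)ᴴ = ρ := by
    intro ρ hρ ht
    refine hIC _ _ ?_ ?_ hρ ht ?_
    · exact posSemidef_sum _ fun p _ => hρ.mul_mul_conjTranspose_same (L p)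
    · have := htr ρ 1
      simpa [hLsum, ht] using this
    · intro x
      rw [htr, hLD]
  have hpure : ∀ v : Fin n → ℂ, v ≠ 0 →
      ∑ p, L p * vecMulVec v (star v) * (L p)ᴴ = vecMulVec v (star v) := by
    intro v hv
    have h0 : v ⬝ᵥ star v ≠ 0 := by simpa using hv
    have hnn : 0 ≤ v ⬝ᵥ star v := dotProduct_self_star_nonneg v
    have h1 := hfix ((v ⬝ᵥ star v)⁻¹ • vecMulVec v (star v))
      ((posSemidef_vecMulVec_self_star v).smul (inv_nonneg.2 hnn))
      (by rw [trace_smul, trace_vecMulVec, smul_eq_mul, inv_mul_cancel₀ h0])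
    simp only [Matrix.mul_smul, Matrix.smul_mul, ← Finset.smul_sum] at h1
    exact smul_right_injective _ (inv_ne_zero h0) h1
  let k0 : Fin n := ⟨0, by omega⟩
  let k1 : Fin n := ⟨1, by omega⟩
  have hk : k0 ≠ k1 := by simp [k0, k1]
  have hsc : ∀ x, ∃ c : ℂ, A x = c • (1 : Mat n) := by
    intro x
    refine ⟨∑ i, star (K x i k0 k0) * K x i k0 k0, ?_⟩
    rw [← hK x, Finset.sum_smul]
    refine Finset.sum_congr rfl fun i _ => ?_
    have h1 : K x i = K x i k0 k0 • (1 : Mat n) := kraus_scalar L hpure (x, i) k0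
    generalize K x i k0 k0 = c at h1 ⊢
    rw [h1]
    simp [smul_smul, mul_comm]
  have hp : ∀ k : Fin n, (vecMulVec (Pi.single k 1) (star (Pi.single k 1)) : Mat n).trace = 1 := by
    intro k
    simp [trace_vecMulVec]
  have heq := hIC _ _ (posSemidef_vecMulVec_self_star (Pi.single k0 1)) (hp k0)
    (posSemidef_vecMulVec_self_star (Pi.single k1 1)) (hp k1) (by
      intro x
      obtain ⟨c, hc⟩ := hsc x
      rw [hc]
      simp only [Matrix.mul_smul, Matrix.mul_one, trace_smul, hp])
  have := congrFun (congrFun heq k0) k0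
  simp [vecMulVec_apply, hk] at this
end
end
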